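/- arXiv:math/0412222 — 3 statements merged into one kernel-verified Lean document; each statement's English description precedes it below -/
import Mathlib

section
/- For every positive integer n there exists a bijection σ ↦ σ^⊥ from I_n to I_n such that for every σ ∈ I_n, Des(σ^⊥) = {1,…,n−1} \ Des(σ); equivalently, d_i(σ^⊥) = n − i − d_i(σ) for all 1 ≤ i < n. Consequently the multivariate polynomial 𝒢_n(x_1,…,x_{n−1}) = Σ_{σ∈I_n} x_1^{d_1(σ)} x_2^{d_2(σ)} ⋯ x_{n−1}^{d_{n−1}(σ)} satisfies 𝒢_n(x_1,…,x_{n−1}) = x_1^{n−1} x_2^{n−2} ⋯ x_{n−1} · 𝒢_n(x_1^{−1},…,x_{n−1}^{−1}). -/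
noncomputable section
open Finset

/-- The set of involutions in the symmetric group on `Fin n`. -/
def Invols (n : ℕ) : Finset (Equiv.Perm (Fin n)) :=
  Finset.univ.filter (fun σ => σ * σ = 1)

/-- `σ` viewed as a function on one-based positions `1,…,n` (via zero-based `Fin n`),
returning one-based values; positions outside `[0,n)` are fixed. -/
def permFun (n : ℕ) (σ : Equiv.Perm (Fin n)) (i : ℕ) : ℕ :=
  if h : i < n then (σ ⟨i, h⟩ : ℕ) else i

/-- The descent set of `σ`, as a subset of `{1,…,n-1}` (one-based positions):
`i` is a descent iff `σ_i > σ_{i+1}`. -/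
def DesSet (n : ℕ) (σ : Equiv.Perm (Fin n)) : Finset ℕ :=
  (Finset.Icc 1 (n - 1)).filter (fun i => permFun n σ i < permFun n σ (i - 1))

/-- The partial descent count `d_i(σ) = |{j ≥ i : j ∈ Des(σ)}|`. -/
def dpart (n : ℕ) (i : ℕ) (σ : Equiv.Perm (Fin n)) : ℕ :=
  ((DesSet n σ).filter (fun j => i ≤ j)).card

/-! A permutation has its descent set inside `S` exactly when it is increasing on the blocks into
which `S` cuts the positions, and its ascent set inside `S` exactly when it is decreasing on them.
Record, for a permutation `σ`, how many positions of each block are sent into each block. Among the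
permutations with the same table exactly one is increasing on blocks together with its inverse, and
exactly one is decreasing on blocks together with its inverse. Inversion transposes the table, so
for the table of an involution both of these permutations are again involutions. Hence, for every
`S`, as many involutions have their descent set inside `S` as have their ascent set inside `S`, and
Möbius inversion over `S` makes descent sets and ascent sets equidistributed on involutions. -/

section Equidistribution

variable {α γ P : Type*}

lemma map_val_eq_of_card_filter_le_eq [PartialOrder P] [OrderBot P] [LocallyFiniteOrder P]
    [DecidableLE P] {s : Finset α} {f g : α → P}
    (h : ∀ p, #{a ∈ s | f a ≤ p} = #{a ∈ s | g a ≤ p}) : s.val.map f = s.val.map g := by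
  classical
  have card_le (k : α → P) (p : P) :
      (#{a ∈ s | k a ≤ p} : ℤ) = ∑ q ∈ Iic p, ((s.val.map k).count q : ℤ) := by
    simp only [← mem_Iic, ← sum_card_fiberwise_eq_card_filter, Nat.cast_sum, Multiset.count_map,
      eq_comm (b := k _)]
    rfl
  ext p
  zify
  rw [IncidenceAlgebra.moebius_inversion_bot _ _ (card_le f),
    IncidenceAlgebra.moebius_inversion_bot _ _ (card_le g)]
  simp only [h]

lemma exists_bijOn_of_map_val_eq {s : Finset α} {f g : α → γ} (h : s.val.map f = s.val.map g) :
    ∃ e : α → α, Set.BijOn e s s ∧ ∀ a ∈ s, g (e a) = f a := by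
  classical
  have card_fiber (k : α → γ) (c : γ) :
      Fintype.card {a : s // k a = c} = (s.val.map k).count c := by
    rw [Fintype.card_subtype, ← s.val.attach_map_val, Multiset.map_map, Multiset.count_map]
    simp only [eq_comm (a := c)]
    rfl
  let e : Equiv.Perm s := Equiv.ofFiberEquiv (f := fun a : s => f a) (g := fun a : s => g a)
    fun c => Fintype.equivOfCardEq (by rw [card_fiber, card_fiber, h])
  refine ⟨Equiv.Perm.ofSubtype e,
    Equiv.bijOn _ (Equiv.Perm.ofSubtype_apply_mem_iff_mem e), fun a ha => ?_⟩
  rw [Equiv.Perm.ofSubtype_apply_of_mem e ha]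
  exact Equiv.ofFiberEquiv_map (f := fun a : s => f a) (g := fun a : s => g a) _ ⟨a, ha⟩

lemma eq_of_monotone_of_map_univ_val_eq [LinearOrder α] [Fintype α] [PartialOrder γ] {f g : α → γ}
    (hf : Monotone f) (hg : Monotone g) (h : univ.val.map f = univ.val.map g) : f = g := by
  let e := Fintype.orderIsoFinOfCardEq α rfl
  have ofFn_perm : (List.ofFn (f ∘ e)).Perm (List.ofFn (g ∘ e)) := by
    rw [← Multiset.coe_eq_coe, ← Fin.univ_val_map, ← Fin.univ_val_map, ← Multiset.map_map,
      ← Multiset.map_map]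
    rwa [show ⇑e = ⇑e.toEquiv from rfl, Multiset.map_univ_val_equiv]
  exact e.surjective.injective_comp_right <| List.ofFn_injective <| ofFn_perm.eq_of_sortedLE
    (hf.comp e.monotone).sortedLE_ofFn (hg.comp e.monotone).sortedLE_ofFn

end Equidistribution

section BlockIncreasing

variable {α β ι κ : Type*}

/-- `f` is strictly increasing on each fibre of `b`. The map `b` sends a position to its block;
"decreasing on blocks" is expressed by composing `f` with `OrderDual.toDual`. -/
def BlockIncreasing [LT α] [LT β] (b : α → ι) (f : α → β) : Prop :=
  ∀ ⦃i j⦄, b i = b j → i < j → f i < f j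

lemma blockIncreasing_comp_ofDual [LT α] [LT β] {b : α → ι} {f : α → β} :
    BlockIncreasing (b ∘ OrderDual.ofDual) (f ∘ OrderDual.ofDual) ↔
      BlockIncreasing b (OrderDual.toDual ∘ f) :=
  ⟨fun h _ _ hb hij => h hb.symm hij, fun h _ _ hb hij => h hb.symm hij⟩

lemma BlockIncreasing.le [PartialOrder α] [Preorder β] {b : α → ι} {f : α → β}
    (hf : BlockIncreasing b f) {i j : α} (hb : b i = b j) (hij : i ≤ j) : f i ≤ f j :=
  hij.eq_or_lt.elim (fun h => h ▸ le_rfl) fun hlt => (hf hb hlt).le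

/-- The block table of `σ`: it contains the pair `(p, q)` as often as `σ` sends a position in
block `p` of `b` to a value in block `q` of `c`. -/
def blockTable [Fintype α] (b : α → ι) (c : β → κ) (σ : α ≃ β) : Multiset (ι × κ) :=
  univ.val.map fun i => (b i, c (σ i))

lemma blockTable_symm [Fintype α] [Fintype β] (b : α → ι) (c : β → κ) (σ : α ≃ β) :
    blockTable c b σ.symm = (blockTable b c σ).map Prod.swap := by
  rw [blockTable, blockTable, ← Multiset.map_univ_val_equiv σ, Multiset.map_map, Multiset.map_map]
  simp

lemma blockTable_swap_trans [Fintype α] [DecidableEq α] {b : α → ι} {c : β → κ} {σ : α ≃ β}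
    {i j : α} (h : b i = b j ∨ c (σ i) = c (σ j)) :
    blockTable b c ((Equiv.swap i j).trans σ) = blockTable b c σ := by
  rcases h with hb | hc
  · rw [blockTable, blockTable, ← Multiset.map_univ_val_equiv (Equiv.swap i j), Multiset.map_map]
    simp [Equiv.apply_swap_eq_self hb]
  · have hswap : ∀ k, c (σ (Equiv.swap i j k)) = c (σ k) :=
      Equiv.apply_swap_eq_self (v := c ∘ σ) hc
    simp only [blockTable, Equiv.trans_apply, hswap]

variable [LinearOrder α] [Fintype α] [LinearOrder β]

lemma exists_blockIncreasing (b : α → ι) (c : β → κ) (σ : α ≃ β) :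
    ∃ τ : α ≃ β, blockTable b c τ = blockTable b c σ ∧
      BlockIncreasing b τ ∧ BlockIncreasing c τ.symm := by
  -- The lexicographically least word with the given table has no descent that a swap could remove.
  have : Nonempty {τ : α ≃ β // blockTable b c τ = blockTable b c σ} := ⟨σ, rfl⟩
  obtain ⟨⟨τ, hτ⟩, hmin⟩ := Finite.exists_min
    fun τ : {τ : α ≃ β // blockTable b c τ = blockTable b c σ} => toLex (τ : α → β)
  have lt_of_lt {i j : α} (h : b i = b j ∨ c (τ i) = c (τ j)) (hij : i < j) : τ i < τ j := by
    by_contra! hle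
    have hlt : τ j < τ i := hle.lt_of_ne (τ.injective.ne hij.ne')
    exact (Pi.lex_desc hij.le hlt).not_ge
      (hmin ⟨(Equiv.swap i j).trans τ, (blockTable_swap_trans h).trans hτ⟩)
  refine ⟨τ, hτ, fun i j hb => lt_of_lt (.inl hb), fun x y hc hxy => ?_⟩
  by_contra! hle
  have hlt : τ.symm y < τ.symm x := hle.lt_of_ne (τ.symm.injective.ne hxy.ne')
  exact hxy.not_gt (by simpa using lt_of_lt (.inr (by simpa using hc.symm)) hlt)

variable [PartialOrder ι] [PartialOrder κ] {b : α → ι} {c : β → κ}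

lemma BlockIncreasing.eq_of_blockTable_eq (hb : Monotone b) (hc : Monotone c)
    {σ τ : α ≃ β} (h : blockTable b c σ = blockTable b c τ)
    (hσ : BlockIncreasing b σ) (hσ' : BlockIncreasing c σ.symm)
    (hτ : BlockIncreasing b τ) (hτ' : BlockIncreasing c τ.symm) : σ = τ := by
  let : Fintype β := Fintype.ofEquiv α σ
  have lex_mono {ρ : α ≃ β} (hρ : BlockIncreasing b ρ) :
      Monotone fun i => toLex (b i, c (ρ i)) := fun _ _ hij =>
    Prod.Lex.toLex_le_toLex'.2 ⟨hb hij, fun hbij => hc (hρ.le hbij hij)⟩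
  have lex_symm_mono {ρ : α ≃ β} (hρ : BlockIncreasing c ρ.symm) :
      Monotone fun x => toLex (c x, ρ.symm x) := fun _ _ hxy =>
    Prod.Lex.toLex_le_toLex'.2 ⟨hc hxy, fun hcxy => hρ.le hcxy hxy⟩
  have same_block : ∀ i, c (σ i) = c (τ i) := by
    have lex_eq := eq_of_monotone_of_map_univ_val_eq (lex_mono hσ) (lex_mono hτ) <| by
      simpa only [blockTable, Multiset.map_map, Function.comp_def] using
        congrArg (Multiset.map toLex) h
    intro i
    simpa using congrFun lex_eq i
  have map_symm (ρ : α ≃ β) : univ.val.map (fun x => toLex (c x, ρ.symm x)) =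
      univ.val.map fun i => toLex (c (ρ i), i) := by
    rw [← Multiset.map_univ_val_equiv ρ, Multiset.map_map]
    simp only [Function.comp_def, Equiv.symm_apply_apply]
  have lex_symm_eq := eq_of_monotone_of_map_univ_val_eq (lex_symm_mono hσ')
    (lex_symm_mono hτ') <| by simp only [map_symm, same_block]
  refine Equiv.symm_bijective.injective (Equiv.ext fun x => ?_)
  simpa using congrFun lex_symm_eq x

theorem existsUnique_blockIncreasing (hb : Monotone b) (hc : Monotone c) (σ : α ≃ β) :
    ∃! τ : α ≃ β, blockTable b c τ = blockTable b c σ ∧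
      BlockIncreasing b τ ∧ BlockIncreasing c τ.symm := by
  obtain ⟨τ, hτ⟩ := exists_blockIncreasing b c σ
  exact ⟨τ, hτ, fun ρ hρ => BlockIncreasing.eq_of_blockTable_eq hb hc (hρ.1.trans hτ.1.symm)
    hρ.2.1 hρ.2.2 hτ.2.1 hτ.2.2⟩

end BlockIncreasing

section Involutions

lemma card_filter_inv_eq_self_eq_card_image {G κ : Type*} [InvolutiveInv G] [Fintype G]
    [DecidableEq G] [DecidableEq κ] {M : G → κ} (hM : ∀ σ τ, M σ = M τ → M σ⁻¹ = M τ⁻¹)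
    {p : G → Prop} [DecidablePred p] (hp : ∀ σ, ∃! τ, M τ = M σ ∧ p τ ∧ p τ⁻¹) :
    #{σ | σ⁻¹ = σ ∧ p σ} = #(image M {σ | σ⁻¹ = σ}) := by
  refine card_nbij M ?_ ?_ ?_
  · intro σ hσ
    simp only [coe_filter, mem_univ, true_and, Set.mem_ofPred_eq] at hσ
    exact mem_image_of_mem M (by simpa using hσ.1)
  · intro σ hσ τ hτ hστ
    simp only [coe_filter, mem_univ, true_and, Set.mem_ofPred_eq] at hσ hτ
    exact (hp τ).unique ⟨hστ, hσ.2, hσ.1.symm ▸ hσ.2⟩ ⟨rfl, hτ.2, hτ.1.symm ▸ hτ.2⟩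
  · intro m hm
    simp only [coe_image, coe_filter, mem_univ, true_and, Set.mem_image, Set.mem_ofPred_eq] at hm ⊢
    obtain ⟨σ, hσ, rfl⟩ := hm
    obtain ⟨τ, ⟨hτσ, hτ, hτ'⟩, huniq⟩ := hp σ
    have hinv : M τ⁻¹ = M σ := by rw [hM τ σ hτσ, hσ]
    exact ⟨τ, ⟨huniq τ⁻¹ ⟨hinv, hτ', by rwa [inv_inv]⟩, hτ⟩, hτσ⟩

variable {α ι : Type*} [LinearOrder α] [Fintype α] [PartialOrder ι] {b : α → ι}

lemma existsUnique_perm_blockIncreasing_toDual (hb : Monotone b) (σ : Equiv.Perm α) :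
    ∃! τ : Equiv.Perm α, blockTable b b τ = blockTable b b σ ∧
      BlockIncreasing b (OrderDual.toDual ∘ τ) ∧ BlockIncreasing b (OrderDual.toDual ∘ ⇑τ⁻¹) := by
  refine (existsUnique_congr fun τ => ?_).1 <|
    existsUnique_blockIncreasing (β := αᵒᵈ) (κ := ιᵒᵈ) hb hb.dual σ
  exact and_congr_right' (and_congr_right' blockIncreasing_comp_ofDual)

open scoped Classical in
theorem card_involutions_blockIncreasing (hb : Monotone b) :
    #{σ : Equiv.Perm α | σ⁻¹ = σ ∧ BlockIncreasing b σ} =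
      #{σ : Equiv.Perm α | σ⁻¹ = σ ∧ BlockIncreasing b (OrderDual.toDual ∘ σ)} := by
  have blockTable_inv (σ τ : Equiv.Perm α) (h : blockTable b b σ = blockTable b b τ) :
      blockTable b b σ⁻¹ = blockTable b b τ⁻¹ :=
    (blockTable_symm b b σ).trans (h ▸ (blockTable_symm b b τ).symm)
  exact (card_filter_inv_eq_self_eq_card_image blockTable_inv
    (existsUnique_blockIncreasing hb hb)).trans
    (card_filter_inv_eq_self_eq_card_image blockTable_inv
      (existsUnique_perm_blockIncreasing_toDual hb)).symm

end Involutions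

section Descents

/-- The block of the zero-based position `i` when the one-based positions `1, …, n` are cut after
each `s ∈ S`: the number of cuts `s ≤ i`. -/
def blockIndex {n : ℕ} (S : Finset ℕ) (i : Fin n) : ℕ := Nat.count (· ∈ S) (i + 1)

variable {n : ℕ} {S : Finset ℕ} {σ τ : Equiv.Perm (Fin n)}

lemma blockIndex_monotone : Monotone (blockIndex S : Fin n → ℕ) := fun _ _ hij =>
  Nat.count_monotone _ (Nat.succ_le_succ hij)

lemma blockIncreasing_blockIndex_iff {β : Type*} [Preorder β] {f : ℕ → β} :
    BlockIncreasing (blockIndex S) (fun i : Fin n => f i) ↔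
      ∀ k ∈ Icc 1 (n - 1), k ∉ S → f (k - 1) < f k := by
  constructor
  · intro h k hk hkS
    obtain ⟨hk1, hkn⟩ := mem_Icc.1 hk
    refine h (i := ⟨k - 1, by omega⟩) (j := ⟨k, by omega⟩) ?_ (Fin.mk_lt_mk.2 (by omega))
    simp [blockIndex, Nat.sub_add_cancel hk1, Nat.count_succ, hkS]
  · intro h i j hb hij
    have not_cut {k : ℕ} (hik : ↑i ≤ k) (hkj : k + 1 ≤ j) : k + 1 ∉ S := fun hk =>
      hb.not_lt <| calc
        Nat.count (· ∈ S) (i + 1) ≤ Nat.count (· ∈ S) (k + 1) :=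
          Nat.count_monotone _ (Nat.succ_le_succ hik)
        _ < Nat.count (· ∈ S) (k + 2) := Nat.count_strict_mono hk (Nat.lt_succ_self _)
        _ ≤ Nat.count (· ∈ S) (j + 1) := Nat.count_monotone _ (Nat.succ_le_succ hkj)
    have strictMonoOn : StrictMonoOn f (Set.Icc i j) :=
      strictMonoOn_of_lt_add_one Set.ordConnected_Icc fun k _ hk hk' =>
        h (k + 1) (mem_Icc.2 ⟨by omega, by have := hk'.2; omega⟩) (not_cut hk.1 hk'.2)
    exact strictMonoOn (Set.left_mem_Icc.2 hij.le) (Set.right_mem_Icc.2 hij.le) hij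

lemma permFun_val (σ : Equiv.Perm (Fin n)) (i : Fin n) : permFun n σ i = σ i := by
  simp [permFun]

lemma permFun_injective (σ : Equiv.Perm (Fin n)) : Function.Injective (permFun n σ) := by
  intro i j hij
  by_cases hi : i < n <;> by_cases hj : j < n <;> simp only [permFun, hi, hj, dif_pos, dif_neg,
    not_false_eq_true] at hij
  · simpa using σ.injective (Fin.ext hij)
  · omega
  · omega
  · exact hij

lemma mem_desSet {k : ℕ} :
    k ∈ DesSet n σ ↔ k ∈ Icc 1 (n - 1) ∧ permFun n σ k < permFun n σ (k - 1) :=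
  mem_filter

lemma desSet_subset_iff : DesSet n σ ⊆ S ↔ BlockIncreasing (blockIndex S) σ := by
  have lt_iff {k : ℕ} (hk : k ∈ Icc 1 (n - 1)) :
      permFun n σ (k - 1) < permFun n σ k ↔ ¬ permFun n σ k < permFun n σ (k - 1) := by
    have pred_ne : k - 1 ≠ k := Nat.sub_one_ne_self (by have := mem_Icc.1 hk; omega)
    exact ⟨fun h => h.not_gt, fun h =>
      (not_lt.1 h).lt_of_ne ((permFun_injective σ).ne pred_ne)⟩
  have h := blockIncreasing_blockIndex_iff (n := n) (S := S) (f := permFun n σ)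
  simp only [permFun_val] at h
  refine Iff.trans ?_ h.symm
  simp only [subset_iff, mem_desSet, and_imp]
  exact forall₂_congr fun k hk => by rw [lt_iff hk, not_imp_not]

lemma sdiff_desSet_subset_iff :
    Icc 1 (n - 1) \ DesSet n σ ⊆ S ↔ BlockIncreasing (blockIndex S) (OrderDual.toDual ∘ σ) := by
  have h := blockIncreasing_blockIndex_iff (n := n) (S := S) (f := OrderDual.toDual ∘ permFun n σ)
  simp only [Function.comp_apply, permFun_val] at h
  refine Iff.trans ?_ h.symm
  simp only [subset_iff, mem_sdiff, mem_desSet, and_imp, not_and]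
  refine forall₂_congr fun k hk => ?_
  simp only [hk, OrderDual.toDual_lt_toDual, forall_const]
  exact not_imp_comm

lemma mem_invols : σ ∈ Invols n ↔ σ⁻¹ = σ := by
  rw [Invols, mem_filter_univ, mul_eq_one_iff_inv_eq]

theorem card_invols_desSet_subset (S : Finset ℕ) :
    #{σ ∈ Invols n | DesSet n σ ⊆ S} = #{σ ∈ Invols n | Icc 1 (n - 1) \ DesSet n σ ⊆ S} := by
  classical
  have h := card_involutions_blockIncreasing (blockIndex_monotone (n := n) (S := S))
  simp only [← desSet_subset_iff, ← sdiff_desSet_subset_iff, ← mem_invols] at h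
  convert! h using 2 <;> ext <;> simp

lemma dpart_add_dpart {i : ℕ} (hi : 1 ≤ i) (h : DesSet n τ = Icc 1 (n - 1) \ DesSet n σ) :
    dpart n i τ + dpart n i σ = n - i := by
  have filter_Icc : {j ∈ Icc 1 (n - 1) | i ≤ j} = Icc i (n - 1) := by
    ext j
    simp only [mem_filter, mem_Icc]
    omega
  have subset : {j ∈ DesSet n σ | i ≤ j} ⊆ {j ∈ Icc 1 (n - 1) | i ≤ j} :=
    filter_subset_filter _ (filter_subset _ _)
  have filter_compl : {j ∈ DesSet n τ | i ≤ j} =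
      {j ∈ Icc 1 (n - 1) | i ≤ j} \ {j ∈ DesSet n σ | i ≤ j} := by
    ext j
    simp only [h, mem_filter, mem_sdiff]
    tauto
  rw [dpart, dpart, filter_compl, card_sdiff_add_card_eq_card subset, filter_Icc, Nat.card_Icc]
  omega

lemma sum_prod_pow_dpart_eq {K : Type*} [Semifield K] {I : Finset (Equiv.Perm (Fin n))}
    {f : Equiv.Perm (Fin n) → Equiv.Perm (Fin n)} (hf : Set.BijOn f I I)
    (hdes : ∀ σ ∈ I, DesSet n (f σ) = Icc 1 (n - 1) \ DesSet n σ)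
    {x : ℕ → K} (hx : ∀ i ∈ Icc 1 (n - 1), x i ≠ 0) :
    ∑ σ ∈ I, ∏ i ∈ Icc 1 (n - 1), x i ^ dpart n i σ =
      (∏ i ∈ Icc 1 (n - 1), x i ^ (n - i)) *
        ∑ σ ∈ I, ∏ i ∈ Icc 1 (n - 1), (x i)⁻¹ ^ dpart n i σ := by
  rw [mul_sum]
  refine (sum_nbij f hf.mapsTo hf.injOn hf.surjOn fun σ hσ => ?_).symm
  rw [← prod_mul_distrib]
  refine prod_congr rfl fun i hi => ?_
  rw [← dpart_add_dpart (mem_Icc.1 hi).1 (hdes σ hσ), inv_pow, pow_add,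
    mul_inv_cancel_right₀ (pow_ne_zero _ (hx i hi))]

end Descents

theorem involution_descent_complement_bijection_general.{u} (n : ℕ) :
    ∃ f : Equiv.Perm (Fin n) → Equiv.Perm (Fin n),
      Set.BijOn f (↑(Invols n)) (↑(Invols n)) ∧
      (∀ σ ∈ Invols n, DesSet n (f σ) = Finset.Icc 1 (n - 1) \ DesSet n σ) ∧
      (∀ σ ∈ Invols n, ∀ i ∈ Finset.Icc 1 (n - 1),
        dpart n i (f σ) = n - i - dpart n i σ) ∧
      (∀ (K : Type u) [Semifield K] (x : ℕ → K), (∀ i ∈ Finset.Icc 1 (n - 1), x i ≠ 0) →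
        ∑ σ ∈ Invols n, ∏ i ∈ Finset.Icc 1 (n - 1), x i ^ dpart n i σ =
          (∏ i ∈ Finset.Icc 1 (n - 1), x i ^ (n - i)) *
            ∑ σ ∈ Invols n, ∏ i ∈ Finset.Icc 1 (n - 1), (x i)⁻¹ ^ dpart n i σ) := by
  have equidistributed := map_val_eq_of_card_filter_le_eq fun S =>
    (card_invols_desSet_subset (n := n) S).symm
  obtain ⟨f, hf, hdes⟩ := exists_bijOn_of_map_val_eq equidistributed
  exact ⟨f, hf, hdes,
    fun σ hσ i hi => Nat.eq_sub_of_add_eq (dpart_add_dpart (mem_Icc.1 hi).1 (hdes σ hσ)),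
    fun _ _ _ => sum_prod_pow_dpart_eq hf hdes⟩

theorem involution_descent_complement_bijection (n : ℕ) (hn : 1 ≤ n) :
    ∃ f : Equiv.Perm (Fin n) → Equiv.Perm (Fin n),
      Set.BijOn f (↑(Invols n)) (↑(Invols n)) ∧
      (∀ σ ∈ Invols n, DesSet n (f σ) = Finset.Icc 1 (n - 1) \ DesSet n σ) ∧
      (∀ σ ∈ Invols n, ∀ i ∈ Finset.Icc 1 (n - 1),
        dpart n i (f σ) = n - i - dpart n i σ) ∧
      (∀ x : ℕ → ℚ, (∀ i, x i ≠ 0) →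
        ∑ σ ∈ Invols n, ∏ i ∈ Finset.Icc 1 (n - 1), x i ^ dpart n i σ =
          (∏ i ∈ Finset.Icc 1 (n - 1), x i ^ (n - i)) *
            ∑ σ ∈ Invols n, ∏ i ∈ Finset.Icc 1 (n - 1), (x i)⁻¹ ^ dpart n i σ) := by
  obtain ⟨f, hf, hdes, hdpart, hgen⟩ := involution_descent_complement_bijection_general n
  exact ⟨f, hf, hdes, hdpart, fun x hx => hgen ℚ x fun i _ => hx i⟩
end
end

section
/- Let n be a positive integer and let β_{n,k} denote the number of involutions in S_n with exactly k descents. Then for all integers k with 1 ≤ k ≤ 0.175·n^{0.931} one has β_{n,k−1} < β_{n,k} and β_{n,n−1−k} > β_{n,n−k}. -/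
noncomputable section
open Finset

/-- The set of fixed-point-free involutions in the symmetric group on `Fin n`. -/
def FPFInvols (n : ℕ) : Finset (Equiv.Perm (Fin n)) :=
  Finset.univ.filter (fun σ => σ * σ = 1 ∧ ∀ i, σ i ≠ i)

/-- The number of descents of `σ`. -/
def desStat (n : ℕ) (σ : Equiv.Perm (Fin n)) : ℕ := (DesSet n σ).card

/-- The major index of `σ`. -/
def majStat (n : ℕ) (σ : Equiv.Perm (Fin n)) : ℕ := ∑ i ∈ DesSet n σ, i

/-- `β_{n,k}`: the number of involutions in `S_n` with exactly `k` descents. -/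
def invDesCount (n k : ℕ) : ℕ :=
  ((Invols n).filter (fun σ => desStat n σ = k)).card

/-!
Call a word `a : Fin n → Fin (m + 1)` compatible with `σ` if it increases weakly everywhere and
strictly at the descents of `σ`. Adding to `a i` the number of ascents of `σ` before `i` turns
compatible words into strictly increasing ones, so there are `C(n + m - d, n)` of them when `σ` has
`d` descents. For an involution `σ`, the pair `(σ, a)` is encoded by the sorted word of pairs
`(a i, a (σ i))`, whose multiset of letters is invariant under swapping coordinates, that is, a
symmetric `(m + 1) × (m + 1)` matrix of natural numbers with sum `n`; every such matrix arises from
exactly one pair. Hence `∑ₖ β_{n,k} C(n + m - k, n)` is the number of these matrices.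

Counting such matrices weighted by their entries gives a three-term recurrence in `n`. The transform
`f ↦ (m ↦ ∑ₖ f k * C(n + m - k, n))` is injective and turns the Eulerian operator into
multiplication by `m + 1`, so this recurrence pulls back to one for the numbers `β_{n,k}`. It shows
that `k ↦ β_{n,k}` is palindromic. The resulting recurrence for the differences
`β_{n,k} - β_{n,k-1}` has nonnegative coefficients below the middle; at the middle, the antisymmetry
of the differences merges two of its terms. By induction all differences with `2 * k < n` are
positive.
-/

section SortedTuples

variable {α : Type*} {n : ℕ}

lemma eq_of_monotone_of_map_univ_eq [PartialOrder α] {p q : Fin n → α} (hp : Monotone p)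
    (hq : Monotone q) (h : univ.val.map p = univ.val.map q) : p = q := by
  simp only [Fin.univ_val_map, Multiset.coe_eq_coe] at h
  exact List.ofFn_injective <|
    h.eq_of_pairwise' hp.sortedLE_ofFn.pairwise hq.sortedLE_ofFn.pairwise

lemma exists_monotone_map_univ_eq [LinearOrder α] {s : Multiset α} (hs : s.card = n) :
    ∃ p : Fin n → α, Monotone p ∧ univ.val.map p = s := by
  obtain rfl : s.sort.length = n := by rw [Multiset.length_sort, hs]
  refine ⟨s.sort.get, (Multiset.pairwise_sort s (· ≤ ·)).sortedLE.monotone_get, ?_⟩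
  rw [Fin.univ_val_map, List.ofFn_get, Multiset.sort_eq]

variable [LinearOrder α]

/-- A word `a` is compatible with a permutation `σ` if it is weakly increasing and `σ` increases
along every constant run of `a`, i.e. `a` has a strict ascent at every descent of `σ`. -/
def IsCompatible (σ : Equiv.Perm (Fin n)) (a : Fin n → α) : Prop :=
  StrictMono fun i ↦ toLex (a i, σ i)

lemma isCompatible_iff {σ : Equiv.Perm (Fin n)} {a : Fin n → α} :
    IsCompatible σ a ↔ Monotone a ∧ ∀ i j, i < j → a i = a j → σ i < σ j := by
  refine ⟨fun h ↦ ⟨Prod.Lex.monotone_fst_ofLex.comp h.monotone, fun i j hij ha ↦ ?_⟩,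
    fun h i j hij ↦ ?_⟩
  · exact ((Prod.Lex.toLex_lt_toLex.1 (h hij)).resolve_left ha.not_lt).2
  · exact Prod.Lex.toLex_lt_toLex.2 <|
      (h.1 hij.le).lt_or_eq.imp_right fun ha ↦ ⟨ha, h.2 i j hij ha⟩

lemma eq_sort_iff_isCompatible {σ : Equiv.Perm (Fin n)} {p : Fin n → α} :
    σ = Tuple.sort p ↔ IsCompatible σ (p ∘ σ) :=
  Tuple.eq_sort_iff'

variable {f : α → α}

lemma sort_mul_sort_of_involutive (hf : f.Involutive) {p : Fin n → α} (hp : Monotone p)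
    (h : f ∘ p ∘ Tuple.sort (f ∘ p) = p) :
    Tuple.sort (f ∘ p) * Tuple.sort (f ∘ p) = 1 := by
  set τ := Tuple.sort (f ∘ p) with hτ
  have f_p_inv (i) : f (p (τ⁻¹ i)) = p i := by
    simpa [hf (p i)] using congrArg f (congrFun h (τ⁻¹ i)).symm
  suffices τ⁻¹ = τ from inv_eq_iff_mul_eq_one.1 this
  rw [hτ, eq_sort_iff_isCompatible, ← hτ, show (f ∘ p) ∘ ⇑τ⁻¹ = p from funext f_p_inv,
    isCompatible_iff]
  refine ⟨hp, fun i j hij hpij ↦ lt_of_not_ge fun hji ↦ ?_⟩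
  have hlt : τ⁻¹ j < τ⁻¹ i := hji.lt_of_ne (τ⁻¹.injective.ne hij.ne')
  have hp_inv : p (τ⁻¹ j) = p (τ⁻¹ i) := hf.injective <| by rw [f_p_inv, f_p_inv, hpij]
  have hcompat : IsCompatible τ p := by
    have := eq_sort_iff_isCompatible.1 hτ
    rwa [Function.comp_assoc, h] at this
  exact hij.not_gt <| by simpa using (isCompatible_iff.1 hcompat).2 _ _ hlt hp_inv

lemma exists_involution_of_map_eq (hf : f.Involutive) {s : Multiset α} (hs : s.card = n)
    (hfs : s.map f = s) :
    ∃ σ ∈ Invols n, ∃ p : Fin n → α, (IsCompatible σ p ∧ f ∘ p ∘ σ = p) ∧ univ.val.map p = s := by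
  obtain ⟨p, hp, hps⟩ := exists_monotone_map_univ_eq hs
  set τ := Tuple.sort (f ∘ p) with hτ
  have hpτ : f ∘ p ∘ τ = p := by
    refine eq_of_monotone_of_map_univ_eq (Tuple.monotone_sort (f ∘ p)) hp ?_
    rw [← Multiset.map_map, ← Multiset.map_map, Multiset.map_univ_val_equiv, hps, hfs]
  refine ⟨τ, by simpa [Invols] using sort_mul_sort_of_involutive hf hp hpτ, p, ⟨?_, hpτ⟩, hps⟩
  simpa only [Function.comp_assoc, hpτ] using eq_sort_iff_isCompatible.1 hτ

end SortedTuples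

section InvariantMultisets

variable {α : Type*} [DecidableEq α] {f : α → α}

lemma map_pair_val (hf : f.Involutive) (x : α) :
    ({x, f x} : Finset α).val.map f = ({x, f x} : Finset α).val := by
  rw [← image_val_of_injOn hf.injective.injOn, image_insert, image_singleton, hf x, pair_comm]

lemma pair_val_le {s : Multiset α} (hs : s.map f = s) {x : α} (hx : x ∈ s) :
    ({x, f x} : Finset α).val ≤ s := by
  refine (Multiset.le_iff_subset (nodup _)).2 fun y hy ↦ ?_
  obtain rfl | rfl : y = x ∨ y = f x := by simpa using hy
  · exact hx
  · exact hs ▸ Multiset.mem_map_of_mem f hx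

variable [Fintype α]

/-- The multisets of size `n` that are mapped to themselves by `f`. When `f` swaps the two
coordinates of a pair, these are the symmetric matrices of natural numbers with entry sum `n`. -/
def invariantMultisets (f : α → α) (n : ℕ) : Finset (Multiset α) :=
  {s ∈ univ.map ⟨((↑) : Sym α n → Multiset α), Sym.coe_injective⟩ | s.map f = s}

lemma mem_invariantMultisets {n : ℕ} {s : Multiset α} :
    s ∈ invariantMultisets f n ↔ s.card = n ∧ s.map f = s := by
  simp only [invariantMultisets, mem_filter, mem_map, mem_univ, true_and,
    Function.Embedding.coeFn_mk, and_congr_left_iff]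
  exact fun _ ↦ ⟨fun ⟨t, ht⟩ ↦ ht ▸ t.2, fun h ↦ ⟨⟨s, h⟩, rfl⟩⟩

lemma sum_sum_count_invariantMultisets (f : α → α) (n : ℕ) :
    ∑ x, ∑ s ∈ invariantMultisets f n, s.count x = n * #(invariantMultisets f n) := by
  rw [sum_comm, sum_congr rfl (g := fun _ ↦ n), sum_const, smul_eq_mul, mul_comm]
  intro s hs
  rw [Multiset.sum_count_eq_card (by simp), (mem_invariantMultisets.1 hs).1]

lemma add_pair_mem_invariantMultisets (hf : f.Involutive) {n : ℕ} {s : Multiset α} (x : α) :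
    s + ({x, f x} : Finset α).val ∈ invariantMultisets f (n + #{x, f x}) ↔
      s ∈ invariantMultisets f n := by
  rw [mem_invariantMultisets, mem_invariantMultisets, Multiset.card_add, card_val,
    add_left_inj, Multiset.map_add, map_pair_val hf, add_left_inj]

lemma sum_count_invariantMultisets_add (hf : f.Involutive) (n : ℕ) (x : α) :
    ∑ s ∈ invariantMultisets f (n + #{x, f x}), s.count x =
      #(invariantMultisets f n) + ∑ s ∈ invariantMultisets f n, s.count x := by
  set orbit : Finset α := {x, f x}
  have count_orbit : orbit.val.count x = 1 :=
    Multiset.count_eq_one_of_mem orbit.nodup (mem_insert_self x {f x})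
  have sub_add_orbit {s} (hs : s ∈ invariantMultisets f (n + #orbit)) (hx : x ∈ s) :
      s - orbit.val + orbit.val = s :=
    tsub_add_cancel_of_le (pair_val_le (mem_invariantMultisets.1 hs).2 hx)
  calc ∑ s ∈ invariantMultisets f (n + #orbit), s.count x
      = ∑ s ∈ invariantMultisets f (n + #orbit) with x ∈ s, s.count x :=
        (sum_filter_of_ne fun _ _ h ↦ Multiset.count_ne_zero.1 h).symm
    _ = ∑ s ∈ invariantMultisets f n, (1 + s.count x) := by
        refine sum_bij' (fun s _ ↦ s - orbit.val) (fun s _ ↦ s + orbit.val) ?_ ?_ ?_ ?_ ?_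
        · intro s hs
          obtain ⟨hs, hx⟩ := mem_filter.1 hs
          rwa [← add_pair_mem_invariantMultisets hf x, sub_add_orbit hs hx]
        · intro s hs
          refine mem_filter.2 ⟨(add_pair_mem_invariantMultisets hf x).2 hs, ?_⟩
          exact Multiset.mem_add.2 (Or.inr (mem_insert_self x {f x}))
        · exact fun s hs ↦ sub_add_orbit (mem_filter.1 hs).1 (mem_filter.1 hs).2
        · exact fun s _ ↦ add_tsub_cancel_right s orbit.val
        · intro s hs
          rw [Multiset.count_sub, count_orbit,
            Nat.add_sub_cancel' (Multiset.one_le_count_iff_mem.2 (mem_filter.1 hs).2)]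
    _ = #(invariantMultisets f n) + ∑ s ∈ invariantMultisets f n, s.count x := by
        rw [sum_add_distrib, card_eq_sum_ones]

lemma card_invariantMultisets_add_two (hf : f.Involutive) (n : ℕ) :
    (n + 2) * #(invariantMultisets f (n + 2)) =
      #{x | f x = x} * #(invariantMultisets f (n + 1)) +
        (Fintype.card α + n) * #(invariantMultisets f n) := by
  have sum_count (x : α) : ∑ s ∈ invariantMultisets f (n + 2), s.count x =
      (if f x = x then #(invariantMultisets f (n + 1)) else 0) +
        (#(invariantMultisets f n) + ∑ s ∈ invariantMultisets f n, s.count x) := by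
    split_ifs with hx
    · have card_orbit : #{x, f x} = 1 := by simp [hx]
      have sum_count_fixed (k) := card_orbit ▸ sum_count_invariantMultisets_add hf k x
      rw [sum_count_fixed (n + 1), sum_count_fixed n]
    · rw [← card_pair (Ne.symm hx), sum_count_invariantMultisets_add hf, zero_add]
  calc (n + 2) * #(invariantMultisets f (n + 2))
      = ∑ x, ∑ s ∈ invariantMultisets f (n + 2), s.count x :=
        (sum_sum_count_invariantMultisets f (n + 2)).symm
    _ = #{x | f x = x} * #(invariantMultisets f (n + 1)) +
          (Fintype.card α * #(invariantMultisets f n) + n * #(invariantMultisets f n)) := by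
        simp only [sum_count, sum_add_distrib, sum_sum_count_invariantMultisets, ← sum_filter,
          sum_const, smul_eq_mul, card_univ]
    _ = _ := by ring

end InvariantMultisets

section CompatibleWords

variable {α : Type*} [Fintype α] [LinearOrder α] {f : α → α}

open Classical in
lemma sum_card_isCompatible_eq_card_invariantMultisets (hf : f.Involutive) (n : ℕ) :
    ∑ σ ∈ Invols n, #{p : Fin n → α | IsCompatible σ p ∧ f ∘ p ∘ σ = p} =
      #(invariantMultisets f n) := by
  rw [← card_sigma]
  refine card_bij (fun x _ ↦ univ.val.map x.2) ?_ ?_ ?_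
  · rintro ⟨σ, p⟩ hx
    simp only [mem_sigma, mem_filter, mem_univ, true_and] at hx
    obtain ⟨-, -, hp⟩ := hx
    refine mem_invariantMultisets.2 ⟨by simp, ?_⟩
    conv_rhs => rw [← hp]
    rw [← Multiset.map_map, ← Multiset.map_map, Multiset.map_univ_val_equiv]
  · rintro ⟨σ, p⟩ hx ⟨τ, q⟩ hy hpq
    simp only [mem_sigma, mem_filter, mem_univ, true_and] at hx hy
    obtain ⟨-, hσ, hp⟩ := hx
    obtain ⟨-, hτ, hq⟩ := hy
    obtain rfl : p = q :=
      eq_of_monotone_of_map_univ_eq (isCompatible_iff.1 hσ).1 (isCompatible_iff.1 hτ).1 hpq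
    have eq_sort {ρ : Equiv.Perm (Fin n)} (hρ : IsCompatible ρ p) (hpρ : f ∘ p ∘ ρ = p) :
        ρ = Tuple.sort (f ∘ p) := by
      rwa [eq_sort_iff_isCompatible, Function.comp_assoc, hpρ]
    rw [eq_sort hσ hp, eq_sort hτ hq]
  · intro s hs
    obtain ⟨hcard, hmap⟩ := mem_invariantMultisets.1 hs
    obtain ⟨σ, hσ, p, hp, hps⟩ := exists_involution_of_map_eq hf hcard hmap
    exact ⟨⟨σ, p⟩, by simpa [hσ] using hp, hps⟩

end CompatibleWords

section Biwords

variable {ι : Type*}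

/-- The exchange of coordinates, on pairs ordered lexicographically. -/
def lexSwap (x : ι ×ₗ ι) : ι ×ₗ ι := toLex (ofLex x).swap

lemma lexSwap_involutive : (lexSwap : ι ×ₗ ι → ι ×ₗ ι).Involutive := fun _ ↦ rfl

lemma card_filter_lexSwap_eq_self [Fintype ι] [DecidableEq ι] :
    #{x : ι ×ₗ ι | lexSwap x = x} = Fintype.card ι := by
  refine card_nbij' (t := univ) (fun x ↦ (ofLex x).1) (fun i ↦ toLex (i, i)) ?_ ?_ ?_ ?_
  · exact fun _ _ ↦ mem_univ _
  · exact fun _ _ ↦ mem_filter.2 ⟨mem_univ _, rfl⟩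
  · intro x hx
    have hx' : (ofLex x).2 = (ofLex x).1 := congrArg (fun y ↦ (ofLex y).1) (mem_filter.1 hx).2
    exact congrArg toLex (Prod.ext rfl hx'.symm)
  · exact fun _ _ ↦ rfl

variable {n : ℕ} {σ : Equiv.Perm (Fin n)}

/-- The word whose `i`-th letter is the pair `(a i, a (σ i))`. -/
def biword (σ : Equiv.Perm (Fin n)) (a : Fin n → ι) (i : Fin n) : ι ×ₗ ι := toLex (a i, a (σ i))

lemma apply_apply_of_mem_Invols (hσ : σ ∈ Invols n) (i : Fin n) : σ (σ i) = i := by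
  simpa using DFunLike.congr_fun (mem_filter.1 hσ).2 i

lemma biword_fst_eq {p : Fin n → ι ×ₗ ι} (hp : lexSwap ∘ p ∘ σ = p) :
    biword σ (fun i ↦ (ofLex (p i)).1) = p :=
  funext fun i ↦ congrArg toLex <| Prod.ext rfl (congrArg (fun x ↦ (ofLex x).2) (congrFun hp i))

lemma lexSwap_comp_biword_comp (hσ : σ ∈ Invols n) (a : Fin n → ι) :
    lexSwap ∘ biword σ a ∘ σ = biword σ a :=
  funext fun i ↦ by simp [biword, lexSwap, apply_apply_of_mem_Invols hσ]

variable [LinearOrder ι]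

lemma isCompatible_biword_iff {a : Fin n → ι} :
    IsCompatible σ (biword σ a) ↔ IsCompatible σ a := by
  simp only [isCompatible_iff]
  constructor
  · rintro ⟨hmono, hties⟩
    have ha : Monotone a := Prod.Lex.monotone_fst_ofLex.comp hmono
    refine ⟨ha, fun i j hij haij ↦ ?_⟩
    rcases Prod.Lex.toLex_le_toLex.1 (hmono hij.le) with h | ⟨-, h⟩
    · exact absurd haij h.ne
    rcases h.lt_or_eq with h | h
    · exact ha.reflect_lt h
    · exact hties i j hij (congrArg toLex (Prod.ext haij h))
  · rintro ⟨ha, hties⟩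
    refine ⟨fun i j hij ↦ Prod.Lex.toLex_le_toLex.2 ?_,
      fun i j hij h ↦ hties i j hij (congrArg (fun x ↦ (ofLex x).1) h)⟩
    rcases hij.eq_or_lt with rfl | hij
    · exact Or.inr ⟨rfl, le_rfl⟩
    · exact (ha hij.le).lt_or_eq.imp_right fun h ↦ ⟨h, ha (hties i j hij h).le⟩

open Classical in
lemma sum_card_isCompatible [Fintype ι] (n : ℕ) :
    ∑ σ ∈ Invols n, #{a : Fin n → ι | IsCompatible σ a} =
      #(invariantMultisets (lexSwap : ι ×ₗ ι → ι ×ₗ ι) n) := by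
  rw [← sum_card_isCompatible_eq_card_invariantMultisets lexSwap_involutive]
  refine sum_congr rfl fun σ hσ ↦
    card_nbij' (biword σ) (fun p i ↦ (ofLex (p i)).1) ?_ ?_ (fun a _ ↦ rfl) ?_
  · intro a ha
    exact mem_filter.2 ⟨mem_univ _, isCompatible_biword_iff.2 (mem_filter.1 ha).2,
      lexSwap_comp_biword_comp hσ a⟩
  · intro p hp
    obtain ⟨-, hcompat, hswap⟩ := mem_filter.1 hp
    refine mem_filter.2 ⟨mem_univ _, ?_⟩
    rwa [← isCompatible_biword_iff, biword_fst_eq hswap]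
  · intro p hp
    exact biword_fst_eq (mem_filter.1 hp).2.2

end Biwords

section Ascents

variable {n : ℕ}

lemma succ_mem_DesSet_iff {σ : Equiv.Perm (Fin (n + 1))} {i : Fin n} :
    (i : ℕ) + 1 ∈ DesSet (n + 1) σ ↔ σ i.succ < σ i.castSucc := by
  simp [DesSet, permFun, Fin.succ, Fin.castSucc, Fin.castAdd, Fin.castLE]

/-- The number of ascents of `σ` among the one-based positions `1, …, i`; positions from `n` on
count as ascents. -/
def ascCount (σ : Equiv.Perm (Fin n)) (i : ℕ) : ℕ := #(Icc 1 i \ DesSet n σ)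

@[simp]
lemma ascCount_zero (σ : Equiv.Perm (Fin n)) : ascCount σ 0 = 0 := by simp [ascCount]

lemma ascCount_succ (σ : Equiv.Perm (Fin n)) (i : ℕ) :
    ascCount σ (i + 1) = ascCount σ i + if i + 1 ∈ DesSet n σ then 0 else 1 := by
  rw [ascCount, ascCount, ← insert_Icc_right_eq_Icc_add_one (by lia)]
  split_ifs with h
  · rw [insert_sdiff_of_mem _ h, add_zero]
  · rw [insert_sdiff_of_notMem _ h, card_insert_of_notMem (by simp)]

lemma monotone_ascCount (σ : Equiv.Perm (Fin n)) : Monotone (ascCount σ) :=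
  monotone_nat_of_le_succ fun i ↦ by rw [ascCount_succ]; exact Nat.le_add_right _ _

lemma desStat_add_ascCount (σ : Equiv.Perm (Fin n)) :
    desStat n σ + ascCount σ (n - 1) = n - 1 := by
  have hsub : DesSet n σ ⊆ Icc 1 (n - 1) := filter_subset _ _
  rw [desStat, ascCount, add_comm, card_sdiff_add_card_eq_card hsub, Nat.card_Icc,
    Nat.add_sub_cancel]

lemma isCompatible_iff_strictMono_add_ascCount {σ : Equiv.Perm (Fin (n + 1))} {m : ℕ}
    {a : Fin (n + 1) → Fin m} :
    IsCompatible σ a ↔ StrictMono fun i : Fin (n + 1) ↦ (a i : ℕ) + ascCount σ i := by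
  rw [IsCompatible, Fin.strictMono_iff_lt_succ, Fin.strictMono_iff_lt_succ]
  refine forall_congr' fun i ↦ ?_
  have ne : σ i.castSucc ≠ σ i.succ := σ.injective.ne i.castSucc_lt_succ.ne
  simp only [Prod.Lex.toLex_lt_toLex, Fin.val_succ, Fin.val_castSucc, ascCount_succ,
    succ_mem_DesSet_iff]
  split_ifs with h
  · simp [h.not_gt]
  · simp only [lt_of_le_of_ne (not_lt.1 h) ne, and_true]
    lia

lemma monotone_sub_ascCount (σ : Equiv.Perm (Fin (n + 1))) {b : Fin (n + 1) → ℕ}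
    (hb : StrictMono b) : Monotone fun i : Fin (n + 1) ↦ (b i : ℤ) - ascCount σ i := by
  refine Fin.monotone_iff_le_succ.2 fun i ↦ ?_
  have := hb i.castSucc_lt_succ
  simp only [Fin.val_succ, Fin.val_castSucc, ascCount_succ]
  split_ifs <;> lia

open Classical in
lemma card_filter_strictMono {ι : Type*} [Fintype ι] [LinearOrder ι] :
    #{b : Fin n → ι | StrictMono b} = (Fintype.card ι).choose n := by
  let e : {b : Fin n → ι // StrictMono b} ≃ (Fin n ↪o ι) :=
    { toFun b := .ofStrictMono b.1 b.2
      invFun b := ⟨b, b.strictMono⟩ }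
  rw [← Fintype.card_subtype, ← Nat.card_eq_fintype_card,
    Nat.card_congr (e.trans Set.powersetCard.ofFinEmbEquiv), Set.powersetCard.card,
    Nat.card_eq_fintype_card]

open Classical in
lemma card_filter_isCompatible (σ : Equiv.Perm (Fin n)) (m : ℕ) :
    #{a : Fin n → Fin m | IsCompatible σ a} = (m + ascCount σ (n - 1)).choose n := by
  obtain _ | n := n
  · simp [IsCompatible, Subsingleton.strictMono]
  rw [Nat.add_sub_cancel, ← Fintype.card_fin (m + ascCount σ n), ← card_filter_strictMono]
  have asc_le (i : Fin (n + 1)) : ascCount σ i ≤ ascCount σ n := monotone_ascCount σ i.is_le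
  refine card_bij (fun a _ i ↦ ⟨a i + ascCount σ i, by have := asc_le i; lia⟩) ?_ ?_ ?_
  · intro a ha
    exact mem_filter.2 ⟨mem_univ _,
      fun i j hij ↦ isCompatible_iff_strictMono_add_ascCount.1 (mem_filter.1 ha).2 hij⟩
  · intro a _ b _ hab
    ext i
    simpa using congrArg Fin.val (congrFun hab i)
  · intro b hb
    have hb' : StrictMono fun i ↦ (b i : ℕ) := (mem_filter.1 hb).2
    have mono := monotone_sub_ascCount σ hb'
    have asc_le_b (i : Fin (n + 1)) : ascCount σ i ≤ b i := by
      have := mono i.zero_le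
      simp only [Fin.val_zero, ascCount_zero] at this
      omega
    have b_lt (i : Fin (n + 1)) : (b i : ℕ) < m + ascCount σ i := by
      have := mono i.le_last
      have := (b (Fin.last n)).2
      simp only [Fin.val_last] at *
      omega
    refine ⟨fun i ↦ ⟨b i - ascCount σ i, by grind⟩, mem_filter.2 ⟨mem_univ _, ?_⟩, ?_⟩
    · exact isCompatible_iff_strictMono_add_ascCount.2 <| by simpa [Nat.sub_add_cancel, asc_le_b]
    · ext i
      simp [asc_le_b i]

end Ascents
section EulerianOperators

/-- The backward difference of a two-sided sequence. -/
def backwardDiff (f : ℤ → ℤ) (k : ℤ) : ℤ := f k - f (k - 1)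

/-- The operator occurring in the Eulerian recurrence `A(c, k) = (k + 1) A(c-1, k) + (c - k)
A(c-1, k-1)`, where `A(c, k)` counts the permutations of `c` letters with `k` descents. -/
def eulerianStep (c : ℤ) (f : ℤ → ℤ) (k : ℤ) : ℤ := (k + 1) * f k + (c - k) * f (k - 1)

variable {f : ℤ → ℤ} {c : ℤ}

lemma backwardDiff_of_neg (hf : ∀ k < 0, f k = 0) : ∀ k < 0, backwardDiff f k = 0 := by
  intro k hk
  rw [backwardDiff, hf k hk, hf (k - 1) (by lia), sub_zero]

lemma eulerianStep_of_neg (hf : ∀ k < 0, f k = 0) : ∀ k < 0, eulerianStep c f k = 0 := by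
  intro k hk
  rw [eulerianStep, hf k hk, hf (k - 1) (by lia), mul_zero, mul_zero, add_zero]

lemma backwardDiff_reflect {ε : ℤ} (hf : ∀ k, f (c - 1 - k) = ε * f k) (k : ℤ) :
    backwardDiff f (c - k) = -ε * backwardDiff f k := by
  have h₀ := hf (k - 1)
  have h₁ := hf k
  rw [sub_sub_sub_cancel_right] at h₀
  rw [sub_right_comm] at h₁
  rw [backwardDiff, backwardDiff, h₀, h₁]
  ring

lemma eulerianStep_reflect (hf : ∀ k, f (c - 1 - k) = f k) (k : ℤ) :
    eulerianStep (c + 1) f (c - k) = eulerianStep (c + 1) f k := by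
  have h₀ := hf (k - 1)
  have h₁ := hf k
  rw [sub_sub_sub_cancel_right] at h₀
  rw [sub_right_comm] at h₁
  rw [eulerianStep, eulerianStep, h₀, h₁]
  ring

end EulerianOperators

section Worpitzky

/-- The transform `f ↦ (m ↦ ∑ i + j = m, f i * C(n + j, n))`. By Worpitzky's identity it sends the
`n`-th row of Eulerian numbers to `m ↦ (m + 1) ^ n`. -/
def worpitzky (n : ℕ) : (ℤ → ℤ) →ₗ[ℤ] (ℕ → ℤ) where
  toFun f m := ∑ x ∈ antidiagonal m, f x.1 * (n + x.2).choose n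
  map_add' f g := by ext m; simp [add_mul, sum_add_distrib]
  map_smul' r f := by ext m; simp [mul_assoc, mul_sum]

lemma worpitzky_apply (n : ℕ) (f : ℤ → ℤ) (m : ℕ) :
    worpitzky n f m = ∑ x ∈ antidiagonal m, f x.1 * (n + x.2).choose n :=
  rfl

lemma sum_antidiagonal_shift {R : Type*} [NonUnitalNonAssocSemiring R] {u : ℤ → R} {v : ℕ → R}
    (hu : u (-1) = 0) (hv : v 0 = 0) (m : ℕ) :
    ∑ x ∈ antidiagonal m, u (x.1 - 1) * v (x.2 + 1) = ∑ x ∈ antidiagonal m, u x.1 * v x.2 := by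
  have left := Nat.sum_antidiagonal_succ (n := m) (f := fun x ↦ u (x.1 - 1) * v x.2)
  have right := Nat.sum_antidiagonal_succ' (n := m) (f := fun x ↦ u (x.1 - 1) * v x.2)
  simpa [hu, hv] using right.symm.trans left

variable {f : ℤ → ℤ} (n : ℕ)

lemma worpitzky_backwardDiff (hf : f (-1) = 0) :
    worpitzky (n + 1) (backwardDiff f) = worpitzky n f := by
  ext m
  have shift := sum_antidiagonal_shift (v := fun j ↦ ((n + j).choose (n + 1) : ℤ)) hf (by simp) m
  simp only [← add_assoc] at shift
  simp only [worpitzky_apply, backwardDiff, sub_mul, sum_sub_distrib, add_right_comm n 1, shift]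
  rw [← sum_sub_distrib]
  refine sum_congr rfl fun x _ ↦ ?_
  rw [Nat.choose_succ_succ]
  push_cast
  ring

lemma worpitzky_eulerianStep (hf : f (-1) = 0) (m : ℕ) :
    worpitzky (n + 1) (eulerianStep (n + 1) f) m = (m + 1) * worpitzky n f m := by
  have shift := sum_antidiagonal_shift (u := fun k ↦ (n - k) * f k)
    (v := fun j ↦ ((n + j).choose (n + 1) : ℤ)) (by simp [hf]) (by simp) m
  simp only [← add_assoc, sub_sub_eq_add_sub] at shift
  have absorb (j : ℕ) : ((n + j).choose (n + 1) : ℤ) * (n + 1) = (n + j).choose n * j := by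
    have := Nat.choose_succ_right_eq (n + j) n
    rw [Nat.add_sub_cancel_left] at this
    exact_mod_cast this
  simp only [worpitzky_apply, eulerianStep, add_mul _ _ (Nat.cast _), sum_add_distrib,
    add_right_comm n 1, shift]
  rw [← sum_add_distrib, mul_sum]
  refine sum_congr rfl fun x hx ↦ ?_
  rw [← mem_antidiagonal.1 hx, Nat.choose_succ_succ]
  push_cast
  linear_combination f x.1 * absorb x.2

variable {n}

lemma eq_zero_of_worpitzky_eq_zero (hf : worpitzky n f = 0) (k : ℕ) : f k = 0 := by
  induction k using Nat.strong_induction_on with | _ k ih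
  have hk := congrFun hf k
  rw [worpitzky_apply, sum_eq_single (k, 0)] at hk
  · simpa using hk
  · rintro ⟨i, j⟩ hx hne
    obtain rfl := mem_antidiagonal.1 hx
    rw [ih i (by grind), zero_mul]
  · simp

lemma eq_of_worpitzky_eq {g : ℤ → ℤ} (hf : ∀ k < 0, f k = 0) (hg : ∀ k < 0, g k = 0)
    (h : worpitzky n f = worpitzky n g) : f = g := by
  ext k
  obtain hk | hk := lt_or_ge k 0
  · rw [hf k hk, hg k hk]
  · lift k to ℕ using hk
    rw [← sub_eq_zero, ← map_sub] at h
    exact sub_eq_zero.1 (eq_zero_of_worpitzky_eq_zero h k)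

end Worpitzky

section InvolutionDescents

/-- The numbers `β_{n,k}`, extended by zero to negative `k`. -/
def intInvDesCount (n : ℕ) (k : ℤ) : ℤ := #{σ ∈ Invols n | (desStat n σ : ℤ) = k}

@[simp]
lemma intInvDesCount_natCast (n k : ℕ) : intInvDesCount n k = invDesCount n k := by
  simp [intInvDesCount, invDesCount]

lemma intInvDesCount_of_neg (n : ℕ) : ∀ k < 0, intInvDesCount n k = 0 := by
  intro k hk
  rw [intInvDesCount, Nat.cast_eq_zero, card_eq_zero, filter_eq_empty_iff]
  lia

lemma intInvDesCount_of_le_one {n : ℕ} (hn : n ≤ 1) (k : ℤ) :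
    intInvDesCount n k = if k = 0 then 1 else 0 := by
  have := Fin.subsingleton_iff_le_one.2 hn
  have desStat_eq (σ : Equiv.Perm (Fin n)) : desStat n σ = 0 := by
    have := desStat_add_ascCount σ
    lia
  have Invols_eq : Invols n = {1} := by
    ext σ
    simp [Invols, Subsingleton.elim σ 1]
  simp [intInvDesCount, desStat_eq, Invols_eq, eq_comm, apply_ite]

lemma choose_add_ascCount {n : ℕ} (σ : Equiv.Perm (Fin n)) (m : ℕ) :
    (m + 1 + ascCount σ (n - 1)).choose n =
      if desStat n σ ≤ m then (n + (m - desStat n σ)).choose n else 0 := by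
  have h := desStat_add_ascCount σ
  obtain _ | n := n
  · have : desStat 0 σ = 0 := by lia
    simp [this]
  split_ifs with hm
  · congr 1
    lia
  · exact Nat.choose_eq_zero_of_lt (by lia)

lemma worpitzky_intInvDesCount (n m : ℕ) :
    worpitzky n (intInvDesCount n) m =
      #(invariantMultisets (lexSwap : Fin (m + 1) ×ₗ Fin (m + 1) → _) n) := by
  classical
  have sum_by_desStat (σ : Equiv.Perm (Fin n)) :
      ((m + 1 + ascCount σ (n - 1)).choose n : ℤ) =
        ∑ x ∈ antidiagonal m, if (desStat n σ : ℤ) = x.1 then ((n + x.2).choose n : ℤ) else 0 := by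
    rw [choose_add_ascCount, Nat.sum_antidiagonal_eq_sum_range_succ_mk]
    simp [sum_ite_eq, Order.lt_add_one_iff]
  rw [← sum_card_isCompatible]
  simp only [card_filter_isCompatible]
  push_cast
  simp only [sum_by_desStat]
  rw [sum_comm, worpitzky_apply]
  refine sum_congr rfl fun x _ ↦ ?_
  rw [intInvDesCount, ← sum_filter, sum_const, nsmul_eq_mul]

lemma intInvDesCount_add_two (n : ℕ) :
    ((n : ℤ) + 2) • intInvDesCount (n + 2) =
      eulerianStep (n + 2) (intInvDesCount (n + 1)) +
        eulerianStep (n + 2) (eulerianStep (n + 1) (intInvDesCount n)) +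
          (n : ℤ) • backwardDiff (backwardDiff (intInvDesCount n)) := by
  have hβ (p) := intInvDesCount_of_neg p
  have hdiff := backwardDiff_of_neg (hβ n)
  have hstep := eulerianStep_of_neg (c := n + 1) (hβ n)
  refine eq_of_worpitzky_eq (n := n + 2) (fun k hk ↦ by simp [hβ _ k hk]) (fun k hk ↦ ?_) ?_
  · simp [backwardDiff_of_neg hdiff k hk, eulerianStep_of_neg hstep k hk,
      eulerianStep_of_neg (hβ (n + 1)) k hk]
  ext m
  have outer (g : ℤ → ℤ) (hg : g (-1) = 0) : worpitzky (n + 2) (eulerianStep (n + 2) g) m =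
      (m + 1) * worpitzky (n + 1) g m := by
    have := worpitzky_eulerianStep (n + 1) hg m
    rwa [Nat.cast_succ, add_assoc] at this
  have count := card_invariantMultisets_add_two (lexSwap_involutive (ι := Fin (m + 1))) n
  rw [card_filter_lexSwap_eq_self] at count
  simp only [map_add, map_smul, Pi.add_apply, Pi.smul_apply, smul_eq_mul,
    outer _ (hβ _ (-1) (by simp)), outer _ (hstep (-1) (by simp)),
    worpitzky_eulerianStep n (hβ n (-1) (by simp)),
    worpitzky_backwardDiff (n + 1) (hdiff (-1) (by simp)),
    worpitzky_backwardDiff n (hβ n (-1) (by simp)), worpitzky_intInvDesCount]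
  rw [Fintype.card_lex, Fintype.card_prod, Fintype.card_fin] at count
  zify at count
  linear_combination count

lemma intInvDesCount_two : intInvDesCount 2 = eulerianStep 2 (intInvDesCount 1) := by
  have step_zero : eulerianStep 1 (intInvDesCount 0) = intInvDesCount 1 := by
    ext k
    simp only [eulerianStep, intInvDesCount_of_le_one zero_le_one,
      intInvDesCount_of_le_one le_rfl]
    grind
  ext k
  have := congrFun (intInvDesCount_add_two 0) k
  simpa [step_zero, ← two_mul] using this

lemma intInvDesCount_reflect (n : ℕ) (k : ℤ) :
    intInvDesCount (n + 1) (n - k) = intInvDesCount (n + 1) k := by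
  induction n using Nat.strong_induction_on generalizing k with | _ n ih
  match n with
  | 0 => simp [intInvDesCount_of_le_one]
  | 1 =>
    rw [intInvDesCount_two]
    exact eulerianStep_reflect (c := 1) (fun j ↦ by simpa using ih 0 one_pos j) k
  | n + 2 =>
    obtain ⟨c, hc⟩ : ∃ c : ℤ, ((n + 2 : ℕ) : ℤ) = c := ⟨_, rfl⟩
    rw [hc]
    have hc₁ : ((n + 1 : ℕ) : ℤ) = c - 1 := by lia
    have ih₁ : ∀ j, intInvDesCount (n + 2) (c - 1 - j) = intInvDesCount (n + 2) j :=
      hc₁ ▸ ih (n + 1) (by lia)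
    have ih₀ : ∀ j, intInvDesCount (n + 1) (c - 1 - 1 - j) = intInvDesCount (n + 1) j :=
      (by lia : (n : ℤ) = c - 1 - 1) ▸ ih n (by lia)
    have diff_reflect := backwardDiff_reflect (ε := 1) (by simpa using ih₀)
    have recurrence (j) := congrFun (intInvDesCount_add_two (n + 1)) j
    simp only [Pi.add_apply, Pi.smul_apply, smul_eq_mul, hc₁, show c - 1 + 2 = c + 1 by ring]
      at recurrence
    refine mul_left_cancel₀ (by lia : c + 1 ≠ 0) ?_
    rw [recurrence, recurrence, eulerianStep_reflect ih₁,
      eulerianStep_reflect (eulerianStep_reflect ih₀), backwardDiff_reflect diff_reflect,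
      neg_neg, one_mul]

lemma invDesCount_reflect {n k : ℕ} (hk : k < n) : invDesCount n (n - 1 - k) = invDesCount n k := by
  obtain _ | n := n
  · simp at hk
  zify
  rw [← intInvDesCount_natCast, ← intInvDesCount_natCast, ← intInvDesCount_reflect]
  congr 1
  lia

lemma invDesCount_zero_pos (n : ℕ) : 0 < invDesCount n 0 :=
  card_pos.2 ⟨1, by simp [Invols, desStat, DesSet, permFun]⟩

end InvolutionDescents
section FirstDifferences

/-- The differences `β_{n,k} - β_{n,k-1}`. -/
def invDesCountDiff (n : ℕ) : ℤ → ℤ := backwardDiff (intInvDesCount n)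

lemma invDesCountDiff_natCast_succ (n k : ℕ) :
    invDesCountDiff n (k + 1) = invDesCount n (k + 1) - invDesCount n k := by
  rw [invDesCountDiff, backwardDiff, add_sub_cancel_right, ← Nat.cast_succ,
    intInvDesCount_natCast, intInvDesCount_natCast]

lemma invDesCountDiff_zero (n : ℕ) : invDesCountDiff n 0 = invDesCount n 0 := by
  simp [invDesCountDiff, backwardDiff, intInvDesCount_of_neg, ← intInvDesCount_natCast]

lemma invDesCountDiff_zero_pos (n : ℕ) : 0 < invDesCountDiff n 0 := by
  rw [invDesCountDiff_zero]
  exact_mod_cast invDesCount_zero_pos n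

lemma invDesCountDiff_of_neg (n : ℕ) : ∀ k < 0, invDesCountDiff n k = 0 :=
  backwardDiff_of_neg (intInvDesCount_of_neg n)

lemma invDesCountDiff_reflect {n : ℕ} (hn : n ≠ 0) (k : ℤ) :
    invDesCountDiff n (n - k) = -invDesCountDiff n k := by
  obtain ⟨n, rfl⟩ := Nat.exists_eq_succ_of_ne_zero hn
  simpa [invDesCountDiff] using
    backwardDiff_reflect (c := (n + 1 : ℕ)) (ε := 1) (by simpa using intInvDesCount_reflect n) k

lemma invDesCountDiff_add_two (n : ℕ) (k : ℤ) :
    (n + 2) * invDesCountDiff (n + 2) k =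
      (k + 1) * invDesCountDiff (n + 1) k + (n + 3 - k) * invDesCountDiff (n + 1) (k - 1) +
        ((k + 1) ^ 2 + n) * invDesCountDiff n k +
        (2 * k * (n + 2 - k) - n + 2) * invDesCountDiff n (k - 1) +
        ((n + 3 - k) ^ 2 + n) * invDesCountDiff n (k - 2) := by
  have recurrence (j) := congrFun (intInvDesCount_add_two n) j
  simp only [Pi.add_apply, Pi.smul_apply, smul_eq_mul, eulerianStep, backwardDiff] at recurrence
  have h₀ := recurrence k
  have h₁ := recurrence (k - 1)
  simp only [invDesCountDiff, backwardDiff]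
  ring_nf at h₀ h₁ ⊢
  linear_combination h₀ - h₁

lemma invDesCountDiff_nonneg {n : ℕ} (hpos : ∀ k : ℤ, 0 ≤ k → 2 * k < n → 0 < invDesCountDiff n k)
    {k : ℤ} (hk : 2 * k ≤ n) : 0 ≤ invDesCountDiff n k := by
  obtain hneg | hneg := lt_or_ge k 0
  · exact (invDesCountDiff_of_neg n k hneg).ge
  obtain hlt | heq := hk.lt_or_eq
  · exact (hpos k hneg hlt).le
  obtain rfl | hn := eq_or_ne n 0
  · obtain rfl : k = 0 := by lia
    exact (invDesCountDiff_zero_pos 0).le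
  · have := invDesCountDiff_reflect hn k
    rw [← heq, two_mul, add_sub_cancel_right] at this
    lia

lemma invDesCountDiff_add_two_pos_of_two_mul_le {n : ℕ}
    (hn : ∀ k : ℤ, 0 ≤ k → 2 * k < n → 0 < invDesCountDiff n k)
    (hn₁ : ∀ k : ℤ, 0 ≤ k → 2 * k < (n + 1 : ℕ) → 0 < invDesCountDiff (n + 1) k) {k : ℤ}
    (hk₀ : 0 < k) (hk : 2 * k ≤ n) : 0 < invDesCountDiff (n + 2) k := by
  have pos := hn₁ k hk₀.le (by lia)
  have nonneg := invDesCountDiff_nonneg hn₁ (k := k - 1) (by lia)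
  have nonneg₀ := invDesCountDiff_nonneg hn hk
  have nonneg₁ := invDesCountDiff_nonneg hn (k := k - 1) (by lia)
  have nonneg₂ := invDesCountDiff_nonneg hn (k := k - 2) (by lia)
  have coeff : 0 ≤ 2 * k * (n + 2 - k) - n + 2 := by nlinarith
  have coeff' : 0 ≤ n + 3 - k := by lia
  refine pos_of_mul_pos_right (a := (n + 2 : ℤ)) ?_ (by lia)
  rw [invDesCountDiff_add_two]
  have : 0 < k + 1 := by lia
  positivity

lemma invDesCountDiff_three : invDesCountDiff 3 1 = invDesCountDiff 3 0 := by
  have h₀ : invDesCount 3 0 = 1 := by decide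
  have h₁ : invDesCount 3 1 = 2 := by decide
  have := invDesCountDiff_natCast_succ 3 0
  simp_all [invDesCountDiff_zero]

lemma invDesCountDiff_add_two_pos_of_two_mul_eq {n : ℕ}
    (hn : ∀ k : ℤ, 0 ≤ k → 2 * k < n → 0 < invDesCountDiff n k)
    (hn₁ : ∀ k : ℤ, 0 ≤ k → 2 * k < (n + 1 : ℕ) → 0 < invDesCountDiff (n + 1) k) {k : ℤ}
    (hk : 2 * k = n + 1) : 0 < invDesCountDiff (n + 2) k := by
  have pos := hn₁ (k - 1) (by lia) (by lia)
  have pos₁ := hn (k - 1) (by lia) (by lia)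
  have nonneg₂ := invDesCountDiff_nonneg hn (k := k - 2) (by lia)
  have middle : invDesCountDiff (n + 1) k = 0 := by
    have := invDesCountDiff_reflect n.succ_ne_zero k
    rw [Nat.cast_succ, ← hk, two_mul, add_sub_cancel_right] at this
    lia
  have antisymm : invDesCountDiff n k = -invDesCountDiff n (k - 1) := by
    rw [← invDesCountDiff_reflect (by lia)]
    congr 1
    lia
  refine pos_of_mul_pos_right (a := (n + 2 : ℤ)) ?_ (by lia)
  have recurrence : (n + 2) * invDesCountDiff (n + 2) k =
      (k + 2) * invDesCountDiff (n + 1) (k - 1) + (k - 1) * (k - 3) * invDesCountDiff n (k - 1) +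
        ((k + 2) ^ 2 + n) * invDesCountDiff n (k - 2) := by
    rw [invDesCountDiff_add_two, middle, antisymm]
    rw [show (n : ℤ) = 2 * k - 1 by lia]
    ring
  rw [recurrence]
  -- The coefficient `(k - 1) * (k - 3)` is negative only for `k = 2`, that is, for `n = 3`.
  obtain rfl | hk₂ := eq_or_ne k 2
  · obtain rfl : n = 3 := by lia
    have : invDesCountDiff 3 (2 - 1) = invDesCountDiff 3 (2 - 2) := invDesCountDiff_three
    lia
  · have : 0 ≤ (k - 1) * (k - 3) := by
      obtain rfl | h : k = 1 ∨ 3 ≤ k := by lia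
      · simp
      · exact mul_nonneg (by lia) (by lia)
    have : 0 < k + 2 := by lia
    positivity

lemma invDesCountDiff_pos (n : ℕ) : ∀ k : ℤ, 0 ≤ k → 2 * k < n → 0 < invDesCountDiff n k := by
  induction n using Nat.twoStepInduction with
  | zero => lia
  | one =>
    intro k hk₀ hk
    obtain rfl : k = 0 := by lia
    exact invDesCountDiff_zero_pos 1
  | more n hn hn₁ =>
    intro k hk₀ hk
    obtain rfl | hk₀ := hk₀.eq_or_lt
    · exact invDesCountDiff_zero_pos _
    obtain hk | hk := le_or_gt (2 * k) n
    · exact invDesCountDiff_add_two_pos_of_two_mul_le hn hn₁ hk₀ hk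
    · exact invDesCountDiff_add_two_pos_of_two_mul_eq hn hn₁ (by lia)

end FirstDifferences

lemma two_mul_lt_of_le_mul_rpow {n k : ℕ} {c r : ℝ} (hn : 1 ≤ n) (hc : 2 * c < 1) (hr : r ≤ 1)
    (hk : (k : ℝ) ≤ c * (n : ℝ) ^ r) : 2 * k < n := by
  have hn' : (1 : ℝ) ≤ n := by exact_mod_cast hn
  suffices (2 : ℝ) * k < n by exact_mod_cast this
  calc (2 : ℝ) * k ≤ 2 * c * (n : ℝ) ^ r := by linarith
    _ < 1 * (n : ℝ) ^ r := by gcongr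
    _ ≤ n := by simpa using Real.rpow_le_rpow_of_exponent_le hn' hr

theorem involution_descents_partially_unimodal_general {n k : ℕ} (hk₁ : 1 ≤ k) (hk : 2 * k < n) :
    invDesCount n (k - 1) < invDesCount n k ∧
      invDesCount n (n - k) < invDesCount n (n - 1 - k) := by
  have lt : invDesCount n (k - 1) < invDesCount n k := by
    obtain ⟨k, rfl⟩ := Nat.exists_eq_add_of_le' hk₁
    have := invDesCountDiff_pos n (k + 1) (by lia) (by lia)
    rw [invDesCountDiff_natCast_succ] at this
    lia
  refine ⟨lt, ?_⟩
  rwa [invDesCount_reflect (by lia), ← invDesCount_reflect (show n - k < n by lia),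
    show n - 1 - (n - k) = k - 1 by lia]

theorem involution_descents_partially_unimodal (n : ℕ) (hn : 1 ≤ n)
    (k : ℕ) (hk1 : 1 ≤ k) (hk2 : (k : ℝ) ≤ 0.175 * (n : ℝ) ^ (0.931 : ℝ)) :
    invDesCount n (k - 1) < invDesCount n k ∧
      invDesCount n (n - k) < invDesCount n (n - 1 - k) :=
  involution_descents_partially_unimodal_general hk1 <|
    two_mul_lt_of_le_mul_rpow hn (by norm_num) (by norm_num) hk2
end
end

section
/- For every even integer n ≥ 2 with n/2 even (resp. n/2 odd), the sequence of coefficients of the even (resp. odd) powers of q in 𝒥𝒟_n(q) = Σ_{π∈J_n^D} q^{inv_D(π)} is symmetric and unimodal, and the coefficients of the odd (resp. even) powers of q are all zero. -/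
noncomputable section
open Finset Polynomial

/-- Signed permutations of `{±1,…,±n}`, modeled as permutations `π` of `ℤ` satisfying
`π(-a) = -π(a)` for all `a` and fixing every integer of absolute value greater than `n`. -/
def SignedPerms (n : ℕ) : Set (Equiv.Perm ℤ) :=
  {π | (∀ a : ℤ, π (-a) = -π a) ∧ ∀ a : ℤ, (n : ℤ) < |a| → π a = a}

/-- The set of involutions among the signed permutations: `I_n^B`. -/
def InvB (n : ℕ) : Set (Equiv.Perm ℤ) := {π ∈ SignedPerms n | π * π = 1}

/-- The number of inversions of the window `(π(1),…,π(n))`. -/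
def winInv (n : ℕ) (π : Equiv.Perm ℤ) : ℕ :=
  (((Finset.Icc (1 : ℤ) n) ×ˢ (Finset.Icc (1 : ℤ) n)).filter
    (fun p => p.1 < p.2 ∧ π p.2 < π p.1)).card

/-- `N_1(π) = |{1 ≤ i ≤ n : π(i) < 0}|`. -/
def negOnes (n : ℕ) (π : Equiv.Perm ℤ) : ℕ :=
  ((Finset.Icc (1 : ℤ) n).filter (fun i => π i < 0)).card

/-- `N_2(π) = |{1 ≤ i < j ≤ n : π(i) + π(j) < 0}|`. -/
def negPairs (n : ℕ) (π : Equiv.Perm ℤ) : ℕ :=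
  (((Finset.Icc (1 : ℤ) n) ×ˢ (Finset.Icc (1 : ℤ) n)).filter
    (fun p => p.1 < p.2 ∧ π p.1 + π p.2 < 0)).card

/-- The type-B inversion statistic `inv_B = inv + N_1 + N_2`. -/
def invBStat (n : ℕ) (π : Equiv.Perm ℤ) : ℕ := winInv n π + negOnes n π + negPairs n π

/-- The type-D inversion statistic `inv_D = inv + N_2`. -/
def invDStat (n : ℕ) (π : Equiv.Perm ℤ) : ℕ := winInv n π + negPairs n π

/-- `I_n^D`: signed involutions with an even number of negative window entries. -/
def InvD (n : ℕ) : Set (Equiv.Perm ℤ) := {π ∈ InvB n | Even (negOnes n π)}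

/-- `I_n^O = I_n^B \ I_n^D`. -/
def InvO (n : ℕ) : Set (Equiv.Perm ℤ) := InvB n \ InvD n

/-- `J_n^D`: elements of `I_n^D` with `π(i) ≠ ±i` for all `1 ≤ i ≤ n`. -/
def JD (n : ℕ) : Set (Equiv.Perm ℤ) :=
  {π ∈ InvD n | ∀ i ∈ Finset.Icc (1 : ℤ) n, π i ≠ i ∧ π i ≠ -i}

/-- `Inv_n^B(q) = Σ_{π ∈ I_n^B} q^{inv_B(π)}`. -/
def InvBPoly (n : ℕ) : Polynomial ℚ := ∑ᶠ π ∈ InvB n, Polynomial.X ^ invBStat n π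

/-- `Inv_n^D(q) = Σ_{π ∈ I_n^D} q^{inv_D(π)}`. -/
def InvDPoly (n : ℕ) : Polynomial ℚ := ∑ᶠ π ∈ InvD n, Polynomial.X ^ invDStat n π

/-- `Inv_n^O(q) = Σ_{π ∈ I_n^O} q^{inv_D(π)}`. -/
def InvOPoly (n : ℕ) : Polynomial ℚ := ∑ᶠ π ∈ InvO n, Polynomial.X ^ invDStat n π

/-- `𝒥𝒟_n(q) = Σ_{π ∈ J_n^D} q^{inv_D(π)}`. -/
def JDPoly (n : ℕ) : Polynomial ℚ := ∑ᶠ π ∈ JD n, Polynomial.X ^ invDStat n π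

/-!
Let `n` be the largest letter of a fixed-point-free signed involution `π` on `2 k + 2` letters.
Deleting `n` together with its partner `|π n|` lowers `inv_D` by `1 + 2 r`, where `r` counts the
elements of `{±1, …, ±n}`, apart from `±n` and `±π n`, that exceed `π n`. The `4 k + 2` choices of
`π n` realise every rank `r ∈ {0, …, 4 k}` once and the rank `2 k` a second time, whence
`𝒥𝒟_{2m}(q) = q ^ m * ∏_{k < m} ([4 k + 1]_{q²} + q ^ (4 k))`.
Multiplication by a factor `[4 k + 1]_q + q ^ (2 k)` preserves symmetry and unimodality: the first
summand turns a sequence into its sums over windows of odd length, the second shifts it to the same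
centre.
-/

open scoped Pointwise

section Counting

theorem even_card_of_involution {α : Type*} {s : Finset α} (f : α → α) (hmem : ∀ a ∈ s, f a ∈ s)
    (hne : ∀ a ∈ s, f a ≠ a) (hinv : ∀ a ∈ s, f (f a) = a) : Even #s := by
  rw [← ZMod.natCast_eq_zero_iff_even, card_eq_sum_ones, Nat.cast_sum]
  exact sum_involution (fun a _ => f a) (fun _ _ => by decide) (fun a ha _ => hne a ha) hmem hinv

theorem finite_setOf_perm_apply_eq_self {α : Type*} {s : Set α} (hs : s.Finite) :
    {π : Equiv.Perm α | ∀ a ∉ s, π a = a}.Finite := by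
  classical
  have := hs.to_subtype
  refine (Set.finite_range (Equiv.Perm.ofSubtype (p := (· ∈ s)))).subset fun π hπ => ?_
  have hmem (a : α) : π a ∈ s ↔ a ∈ s :=
    ⟨fun h => by_contra fun ha => ha (hπ a ha ▸ h),
      fun ha => by_contra fun h => h ((π.injective (hπ _ h)).symm ▸ ha)⟩
  exact ⟨π.subtypePerm hmem,
    Equiv.Perm.ofSubtype_subtypePerm hmem fun a ha => by_contra fun h => ha (hπ a h)⟩

variable {α M : Type*} [LinearOrder α] [AddCommMonoid M]

theorem sum_card_filter_lt (s : Finset α) (f : ℕ → M) :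
    ∑ a ∈ s, f #{b ∈ s | b < a} = ∑ t ∈ range #s, f t := by
  induction s using Finset.induction_on_max with
  | empty => simp
  | insert a s ha ih =>
    have has : a ∉ s := fun h => (ha a h).false
    have hlow : ∀ b ∈ s, #{c ∈ insert a s | c < b} = #{c ∈ s | c < b} := fun b hb => by
      rw [filter_insert, if_neg (ha b hb).not_gt]
    have htop : #{c ∈ insert a s | c < a} = #s := by
      rw [filter_insert, if_neg (lt_irrefl a), filter_true_of_mem ha]
    rw [sum_insert has, card_insert_of_notMem has, sum_range_succ, htop, ← ih, add_comm]
    exact congrArg (· + _) (sum_congr rfl fun b hb => by rw [hlow b hb])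

theorem sum_card_filter_gt (s : Finset α) (f : ℕ → M) :
    ∑ a ∈ s, f #{b ∈ s | a < b} = ∑ t ∈ range #s, f t :=
  sum_card_filter_lt (α := αᵒᵈ) s f

end Counting

section SignedRank

/-- The number of elements of `{c, -c}` that exceed `a`. -/
def signedGtCount (c a : ℤ) : ℕ := (if a < c then 1 else 0) + (if a < -c then 1 else 0)

variable {U : Finset ℤ}

theorem sum_signedGtCount_of_pos (hU : ∀ i ∈ U, 0 < i) {j : ℤ} (hj : 0 < j) :
    ∑ i ∈ U.erase j, signedGtCount i j = #{i ∈ U | j < i} := by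
  have hterm : ∀ i ∈ U, signedGtCount i j = if j < i then 1 else 0 := fun i hi => by
    have := hU i hi
    unfold signedGtCount
    split_ifs <;> omega
  rw [sum_congr rfl fun i hi => hterm i (mem_of_mem_erase hi), ← card_filter, filter_erase,
    erase_eq_of_notMem (by simp)]

theorem sum_signedGtCount_neg (hU : ∀ i ∈ U, 0 < i) {j : ℤ} (hj : j ∈ U) :
    ∑ i ∈ U.erase j, signedGtCount i (-j) = #U - 1 + #{i ∈ U | i < j} := by
  have hterm : ∀ i ∈ U, signedGtCount i (-j) = 1 + if i < j then 1 else 0 := fun i hi => by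
    have := hU i hi
    have := hU j hj
    unfold signedGtCount
    split_ifs <;> omega
  rw [sum_congr rfl fun i hi => hterm i (mem_of_mem_erase hi), sum_add_distrib, ← card_eq_sum_ones,
    card_erase_of_mem hj, ← card_filter, filter_erase, erase_eq_of_notMem (by simp)]

theorem disjoint_neg_of_pos (hU : ∀ i ∈ U, 0 < i) : Disjoint U (-U) :=
  disjoint_left.2 fun a ha hna => by
    have := hU a ha
    have := hU (-a) (mem_neg'.1 hna)
    omega

theorem mem_union_neg_of_abs_mem {a : ℤ} (ha : |a| ∈ U) : a ∈ U ∪ -U := by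
  rw [mem_union, mem_neg']
  rcases abs_choice a with h | h <;> rw [h] at ha <;> tauto

theorem abs_mem_of_mem_union_neg (hU : ∀ i ∈ U, 0 < i) {a : ℤ} (ha : a ∈ U ∪ -U) : |a| ∈ U := by
  rcases mem_union.1 ha with h | h
  · rwa [abs_of_pos (hU a h)]
  · rw [mem_neg'] at h
    rwa [← abs_neg, abs_of_pos (hU _ h)]

/-- Each element of `±U` is ranked from the top among the others, its own negative left out. The
positive elements get the ranks `0, …, k` and the negative ones `k, …, 2k`: only `k` repeats. -/
theorem sum_signed_rank {M : Type*} [AddCommMonoid M] (hU : ∀ i ∈ U, 0 < i) {k : ℕ}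
    (hk : #U = k + 1) (f : ℕ → M) :
    ∑ e ∈ U ∪ -U, f (∑ i ∈ U.erase |e|, signedGtCount i e) =
      ∑ t ∈ range (2 * k + 1), f t + f k := by
  have hpos : ∑ j ∈ U, f (∑ i ∈ U.erase |j|, signedGtCount i j) = ∑ t ∈ range (k + 1), f t := by
    rw [← hk, ← sum_card_filter_gt]
    exact sum_congr rfl fun j hj => by
      rw [abs_of_pos (hU j hj), sum_signedGtCount_of_pos hU (hU j hj)]
  have hneg : ∑ j ∈ U, f (∑ i ∈ U.erase |-j|, signedGtCount i (-j)) =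
      ∑ t ∈ range (k + 1), f (k + t) := by
    rw [← hk, ← sum_card_filter_lt U fun t => f (k + t)]
    exact sum_congr rfl fun j hj => by
      rw [abs_neg, abs_of_pos (hU j hj), sum_signedGtCount_neg hU hj, hk, Nat.add_sub_cancel]
  rw [sum_union (disjoint_neg_of_pos hU), sum_neg_index, hpos, hneg, sum_range_succ f k, two_mul,
    add_assoc k, sum_range_add f k (k + 1), add_right_comm]

end SignedRank

section SignedSwap

/-- The signed transposition exchanging `a` with `b` and `-a` with `-b`, for `a` and `b` nonzero. -/
def signedSwap (a b : ℤ) : Equiv.Perm ℤ := Equiv.swap a b * Equiv.swap (-a) (-b)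

variable {a b c : ℤ}

theorem signedSwap_comm (a b : ℤ) : signedSwap a b = signedSwap b a := by
  rw [signedSwap, signedSwap, Equiv.swap_comm a, Equiv.swap_comm (-a)]

theorem signedSwap_apply_of_abs_ne (ha : |c| ≠ |a|) (hb : |c| ≠ |b|) : signedSwap a b c = c := by
  rw [Ne, abs_eq_abs, not_or] at ha hb
  rw [signedSwap, Equiv.Perm.mul_apply, Equiv.swap_apply_of_ne_of_ne ha.2 hb.2,
    Equiv.swap_apply_of_ne_of_ne ha.1 hb.1]

theorem signedSwap_apply_left (ha : a ≠ 0) (hab : |a| ≠ |b|) : signedSwap a b a = b := by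
  rw [Ne, abs_eq_abs, not_or] at hab
  rw [signedSwap, Equiv.Perm.mul_apply, Equiv.swap_apply_of_ne_of_ne (by omega) hab.2,
    Equiv.swap_apply_left]

theorem mul_signedSwap_of_odd {π : Equiv.Perm ℤ} (hodd : ∀ x, π (-x) = -π x) (a b : ℤ) :
    π * signedSwap a b = signedSwap (π a) (π b) * π := by
  rw [signedSwap, signedSwap, ← mul_assoc, Equiv.mul_swap_eq_swap_mul π, mul_assoc,
    Equiv.mul_swap_eq_swap_mul π, hodd, hodd, mul_assoc]

theorem signedSwap_neg_neg (ha : a ≠ 0) (hb : b ≠ 0) : signedSwap (-a) (-b) = signedSwap a b := by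
  rw [signedSwap, signedSwap, neg_neg, neg_neg]
  by_cases hab : a = -b
  · rw [hab, neg_neg, Equiv.swap_comm]
  · rw [Equiv.mul_swap_eq_swap_mul, Equiv.swap_apply_of_ne_of_ne (by omega) (by omega),
      Equiv.swap_apply_of_ne_of_ne (by omega) (by omega)]

theorem signedSwap_apply_neg (ha : a ≠ 0) (hb : b ≠ 0) (c : ℤ) :
    signedSwap a b (-c) = -signedSwap a b c := by
  have h := mul_signedSwap_of_odd (π := Equiv.neg ℤ) (fun _ => rfl) a b
  simp only [Equiv.neg_apply, signedSwap_neg_neg ha hb] at h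
  exact (DFunLike.congr_fun h c).symm

theorem signedSwap_mul_self (ha : a ≠ 0) (hb : b ≠ 0) : signedSwap a b * signedSwap a b = 1 := by
  nth_rw 2 [← signedSwap_neg_neg ha hb]
  simp [signedSwap, mul_assoc]

theorem abs_signedSwap_of_abs_eq (ha : a ≠ 0) (hb : b ≠ 0) (hab : |a| ≠ |b|) (hc : |c| = |a|) :
    |signedSwap a b c| = |b| := by
  rcases abs_eq_abs.1 hc with rfl | rfl
  · rw [signedSwap_apply_left ha hab]
  · rw [signedSwap_apply_neg ha hb, signedSwap_apply_left ha hab, abs_neg]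

theorem signedSwap_mul_mul_self {π : Equiv.Perm ℤ} (hodd : ∀ x, π (-x) = -π x) (hπ : π * π = 1)
    (ha : a ≠ 0) (hb : b ≠ 0) (hab : signedSwap (π a) (π b) = signedSwap a b) :
    signedSwap a b * π * (signedSwap a b * π) = 1 := by
  rw [mul_assoc, ← mul_assoc π, mul_signedSwap_of_odd hodd, hab, mul_assoc _ π, hπ, mul_one,
    signedSwap_mul_self ha hb]

end SignedSwap

/-- The permutation `π` is a signed involution supported on `±S`, without `i ∈ S` such that
`π i = ±i`. For `S = {1, …, n}` these are the elements of `J_n^D`; general `S` allow a pair of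
letters to be removed without relabelling the others. -/
structure IsFPFSignedInvolution (S : Finset ℤ) (π : Equiv.Perm ℤ) : Prop where
  map_neg : ∀ a, π (-a) = -π a
  mul_self : π * π = 1
  apply_of_abs_notMem : ∀ a, |a| ∉ S → π a = a
  abs_apply_ne : ∀ a, |a| ∈ S → |π a| ≠ |a|

namespace IsFPFSignedInvolution

variable {S T : Finset ℤ} {π ρ : Equiv.Perm ℤ} {a b c : ℤ}

theorem apply_apply (hπ : IsFPFSignedInvolution S π) (a : ℤ) : π (π a) = a :=
  DFunLike.congr_fun hπ.mul_self a

theorem apply_zero (hπ : IsFPFSignedInvolution S π) : π 0 = 0 := by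
  have := hπ.map_neg 0
  rw [neg_zero] at this
  omega

theorem ne_zero (hπ : IsFPFSignedInvolution S π) (ha : |a| ∈ S) : a ≠ 0 := by
  rintro rfl
  exact hπ.abs_apply_ne 0 ha (congrArg abs hπ.apply_zero)

theorem apply_ne_zero (hπ : IsFPFSignedInvolution S π) (ha : |a| ∈ S) : π a ≠ 0 := fun h =>
  hπ.ne_zero ha (by rw [← hπ.apply_apply a, h, hπ.apply_zero])

theorem abs_apply_mem (hπ : IsFPFSignedInvolution S π) (ha : |a| ∈ S) : |π a| ∈ S := by
  by_contra h
  have hfix := hπ.apply_of_abs_notMem _ h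
  rw [hπ.apply_apply] at hfix
  exact h (hfix ▸ ha)

theorem abs_apply_abs (hπ : IsFPFSignedInvolution S π) (a : ℤ) : |π (|a|)| = |π a| := by
  rcases abs_choice a with h | h <;> rw [h]
  rw [hπ.map_neg, abs_neg]

theorem abs_apply_inj (hπ : IsFPFSignedInvolution S π) : |π a| = |π b| ↔ |a| = |b| := by
  rw [abs_eq_abs, abs_eq_abs, ← hπ.map_neg, π.injective.eq_iff, π.injective.eq_iff]

theorem abs_apply_eq_iff (hπ : IsFPFSignedInvolution S π) : |π a| = |b| ↔ |a| = |π b| := by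
  rw [← hπ.abs_apply_inj, hπ.apply_apply]

theorem abs_apply_mem_erase (hπ : IsFPFSignedInvolution S π)
    (ha : |a| ∈ (S.erase |b|).erase |π b|) : |π a| ∈ (S.erase |b|).erase |π b| := by
  simp only [mem_erase, ne_eq, hπ.abs_apply_inj, hπ.abs_apply_eq_iff] at ha ⊢
  exact ⟨ha.2.1, ha.1, hπ.abs_apply_mem ha.2.2⟩

theorem sum_comp_abs_apply {M : Type*} [AddCommMonoid M] (hπ : IsFPFSignedInvolution S π)
    (hpos : ∀ i ∈ T, 0 < i) (hT : ∀ i ∈ T, |π i| ∈ T) (f : ℤ → M) :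
    ∑ i ∈ T, f |π i| = ∑ i ∈ T, f i := by
  have hinv : ∀ i ∈ T, |π (|π i|)| = i := fun i hi => by
    rw [hπ.abs_apply_abs, hπ.apply_apply, abs_of_pos (hpos i hi)]
  exact sum_nbij' (fun i => |π i|) (fun i => |π i|) hT hT hinv hinv fun _ _ => rfl

theorem signedSwap_mul_apply (hρ : IsFPFSignedInvolution T ρ) (ha : |a| ∉ T) (hb : |b| ∉ T)
    (hc : |c| ∈ T) : (signedSwap a b * ρ) c = ρ c :=
  have hρc := hρ.abs_apply_mem hc
  signedSwap_apply_of_abs_ne (fun h => ha (h ▸ hρc)) (fun h => hb (h ▸ hρc))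

theorem signedSwap_mul (hρ : IsFPFSignedInvolution T ρ) (ha : |a| ∉ T) (hb : |b| ∉ T)
    (ha0 : a ≠ 0) (hb0 : b ≠ 0) (hab : |a| ≠ |b|) :
    IsFPFSignedInvolution (insert |a| (insert |b| T)) (signedSwap a b * ρ) where
  map_neg c := by
    rw [Equiv.Perm.mul_apply, hρ.map_neg, signedSwap_apply_neg ha0 hb0, Equiv.Perm.mul_apply]
  mul_self := signedSwap_mul_mul_self hρ.map_neg hρ.mul_self ha0 hb0 <| by
    rw [hρ.apply_of_abs_notMem a ha, hρ.apply_of_abs_notMem b hb]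
  apply_of_abs_notMem c hc := by
    simp only [mem_insert, not_or] at hc
    rw [Equiv.Perm.mul_apply, hρ.apply_of_abs_notMem c hc.2.2,
      signedSwap_apply_of_abs_ne hc.1 hc.2.1]
  abs_apply_ne c hc := by
    by_cases hcT : |c| ∈ T
    · rw [hρ.signedSwap_mul_apply ha hb hcT]
      exact hρ.abs_apply_ne c hcT
    · rw [Equiv.Perm.mul_apply, hρ.apply_of_abs_notMem c hcT]
      simp only [mem_insert, hcT, or_false] at hc
      rcases hc with hc | hc
      · rw [abs_signedSwap_of_abs_eq ha0 hb0 hab hc, hc]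
        exact hab.symm
      · rw [signedSwap_comm, abs_signedSwap_of_abs_eq hb0 ha0 hab.symm hc, hc]
        exact hab

theorem signedSwap_mul_erase (hπ : IsFPFSignedInvolution S π) (ha : |a| ∈ S) :
    IsFPFSignedInvolution ((S.erase |a|).erase |π a|) (signedSwap a (π a) * π) := by
  have ha0 := hπ.ne_zero ha
  have hb0 := hπ.apply_ne_zero ha
  have hab : |π a| ≠ |a| := hπ.abs_apply_ne a ha
  have hodd (c : ℤ) : (signedSwap a (π a) * π) (-c) = -(signedSwap a (π a) * π) c := by
    rw [Equiv.Perm.mul_apply, hπ.map_neg, signedSwap_apply_neg ha0 hb0, Equiv.Perm.mul_apply]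
  have hfix_left : (signedSwap a (π a) * π) a = a := by
    rw [Equiv.Perm.mul_apply, signedSwap_comm, signedSwap_apply_left hb0 hab]
  have hfix_right : (signedSwap a (π a) * π) (π a) = π a := by
    rw [Equiv.Perm.mul_apply, hπ.apply_apply, signedSwap_apply_left ha0 hab.symm]
  refine ⟨hodd, ?_, fun c hc => ?_, fun c hc => ?_⟩
  · refine signedSwap_mul_mul_self hπ.map_neg hπ.mul_self ha0 hb0 ?_
    rw [hπ.apply_apply, signedSwap_comm]
  · simp only [mem_erase, not_and_or, not_not] at hc
    rcases hc with hc | hc | hc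
    · rcases abs_eq_abs.1 hc with rfl | rfl
      · exact hfix_right
      · rw [hodd, hfix_right]
    · rcases abs_eq_abs.1 hc with rfl | rfl
      · exact hfix_left
      · rw [hodd, hfix_left]
    · rw [Equiv.Perm.mul_apply, hπ.apply_of_abs_notMem c hc]
      exact signedSwap_apply_of_abs_ne (fun h => hc (h ▸ ha))
        (fun h => hc (h ▸ hπ.abs_apply_mem ha))
  · have hπc := hπ.abs_apply_mem_erase hc
    simp only [mem_erase] at hπc
    rw [Equiv.Perm.mul_apply, signedSwap_apply_of_abs_ne hπc.2.1 hπc.1]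
    exact hπ.abs_apply_ne c (mem_of_mem_erase (mem_of_mem_erase hc))

theorem finite_setOf (S : Finset ℤ) : {π | IsFPFSignedInvolution S π}.Finite :=
  (finite_setOf_perm_apply_eq_self (S ∪ -S).finite_toSet).subset fun _ hπ a ha =>
    hπ.apply_of_abs_notMem a fun h => ha (mem_union_neg_of_abs_mem h)

theorem even_negOnes {n : ℕ} (hπ : IsFPFSignedInvolution (Icc 1 (n : ℤ)) π) :
    Even (negOnes n π) := by
  have hpos : ∀ i ∈ Icc 1 (n : ℤ), 0 < i := fun i hi => by
    have := mem_Icc.1 hi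
    omega
  have hinv (a : ℤ) : π (-π a) = -a := by rw [hπ.map_neg, hπ.apply_apply]
  refine even_card_of_involution (fun i => -π i) (fun i hi => ?_) (fun i hi h => ?_)
    fun i _ => by rw [hinv, neg_neg]
  · obtain ⟨hi, hneg⟩ := mem_filter.1 hi
    have hmem := hπ.abs_apply_mem (a := i) (by rwa [abs_of_pos (hpos i hi)])
    rw [abs_of_neg hneg] at hmem
    exact mem_filter.2 ⟨hmem, by rw [hinv, neg_neg_iff_pos]; exact hpos i hi⟩
  · have hi := (mem_filter.1 hi).1
    exact hπ.abs_apply_ne i (by rwa [abs_of_pos (hpos i hi)]) (by rw [← abs_neg, h])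

end IsFPFSignedInvolution

theorem mem_JD_iff {n : ℕ} {π : Equiv.Perm ℤ} :
    π ∈ JD n ↔ IsFPFSignedInvolution (Icc 1 (n : ℤ)) π := by
  refine ⟨?_, fun hπ => ⟨⟨⟨⟨hπ.map_neg, fun a ha => ?_⟩, hπ.mul_self⟩, hπ.even_negOnes⟩,
    fun i hi => ?_⟩⟩
  · rintro ⟨⟨⟨⟨hodd, hsupp⟩, hinv⟩, -⟩, hne⟩
    refine ⟨hodd, hinv, fun a ha => ?_, fun a ha h => ?_⟩
    · rcases eq_or_ne a 0 with rfl | ha0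
      · have := hodd 0
        rw [neg_zero] at this
        omega
      · have := abs_pos.2 ha0
        exact hsupp a (by rw [mem_Icc] at ha; omega)
    · have habs : |π (|a|)| = |a| := by
        rcases abs_choice a with h' | h' <;> rw [h']
        · rw [h, h']
        · rw [hodd, abs_neg, h, h']
      have := hne _ ha
      rcases abs_choice (π (|a|)) with h' | h' <;> omega
  · exact hπ.apply_of_abs_notMem a (by rw [mem_Icc]; omega)
  · rw [← not_or, ← abs_eq_abs]
    have := mem_Icc.1 hi
    exact hπ.abs_apply_ne i (by rwa [abs_of_pos (by omega)])

/-- The contribution of the positions `i` and `k` to the type-D inversion statistic: for `i < k` it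
is `[π k < π i] + [π k < -π i]`, which depends on `π i` through `|π i|` only. -/
def invDTerm (π : ℤ → ℤ) (i k : ℤ) : ℕ := if i < k then signedGtCount |π i| (π k) else 0

/-- The type-D inversion statistic restricted to positions in `S`. -/
def invDOn (S : Finset ℤ) (π : ℤ → ℤ) : ℕ := ∑ i ∈ S, ∑ k ∈ S, invDTerm π i k

theorem signedGtCount_abs (c a : ℤ) : signedGtCount |c| a = signedGtCount c a := by
  rcases abs_choice c with h | h <;> rw [h]
  rw [signedGtCount, signedGtCount, neg_neg, add_comm]

theorem invDStat_eq_invDOn (n : ℕ) (π : Equiv.Perm ℤ) :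
    invDStat n π = invDOn (Icc 1 (n : ℤ)) π := by
  simp only [invDStat, winInv, negPairs, invDOn, card_filter, sum_product, ← sum_add_distrib]
  refine sum_congr rfl fun i _ => sum_congr rfl fun k _ => ?_
  rw [invDTerm, signedGtCount_abs, signedGtCount]
  split_ifs <;> omega

theorem invDOn_congr {S : Finset ℤ} {π ρ : ℤ → ℤ} (h : ∀ i ∈ S, π i = ρ i) :
    invDOn S π = invDOn S ρ :=
  sum_congr rfl fun i hi => sum_congr rfl fun k hk => by rw [invDTerm, invDTerm, h i hi, h k hk]

theorem invDOn_insert {S : Finset ℤ} {j : ℤ} (hj : j ∉ S) (π : ℤ → ℤ) :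
    invDOn (insert j S) π = invDOn S π + ∑ i ∈ S, (invDTerm π i j + invDTerm π j i) := by
  have hself : invDTerm π j j = 0 := if_neg (lt_irrefl j)
  simp only [invDOn, sum_insert hj, sum_add_distrib, hself]
  ring

namespace IsFPFSignedInvolution

variable {S : Finset ℤ} {π : Equiv.Perm ℤ} {n : ℤ}

theorem invDTerm_add_invDTerm_abs_apply (hπ : IsFPFSignedInvolution S π) {i : ℤ} (hi : 0 < i)
    (hin : |π i| < n) (hne : i ≠ |π n|) (hn0 : π n ≠ 0) :
    invDTerm π i |π n| + invDTerm π |π n| i = signedGtCount i (π n) := by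
  obtain ⟨hlow, hup⟩ := abs_lt.1 hin
  have hpartner : π (|π n|) = n ∧ |π n| = π n ∨ π (|π n|) = -n ∧ |π n| = -π n := by
    rcases abs_choice (π n) with h | h <;> rw [h]
    · exact Or.inl ⟨hπ.apply_apply n, rfl⟩
    · exact Or.inr ⟨by rw [hπ.map_neg, hπ.apply_apply], rfl⟩
  have := abs_pos.2 hn0
  simp only [invDTerm, signedGtCount_abs]
  unfold signedGtCount
  rcases hpartner with ⟨hval, habs⟩ | ⟨hval, habs⟩ <;> rw [hval, habs] <;> rw [habs] at hne this <;>
    split_ifs <;> omega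

theorem invDOn_eq_add_of_max (hπ : IsFPFSignedInvolution S π) (hpos : ∀ i ∈ S, 0 < i)
    (hn : n ∈ S) (hmax : ∀ i ∈ S, i ≤ n) :
    invDOn S π = invDOn ((S.erase n).erase |π n|) π +
      (1 + 2 * ∑ i ∈ (S.erase n).erase |π n|, signedGtCount i (π n)) := by
  have habs_n : |n| = n := abs_of_pos (hpos n hn)
  have hnS : |n| ∈ S := by rwa [habs_n]
  have hlt : ∀ i ∈ S.erase n, i < n := fun i hi =>
    (hmax i (mem_of_mem_erase hi)).lt_of_ne (ne_of_mem_erase hi)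
  have hpartner : |π n| ∈ S.erase n :=
    mem_erase.2 ⟨fun h => hπ.abs_apply_ne n hnS (h.trans habs_n.symm), hπ.abs_apply_mem hnS⟩
  set T := (S.erase n).erase |π n|
  have hposT : ∀ i ∈ T, 0 < i := fun i hi => hpos i (mem_of_mem_erase (mem_of_mem_erase hi))
  have hmapT : ∀ i ∈ T, |π i| ∈ T := fun i hi => by
    have hmem := hπ.abs_apply_mem_erase (a := i) (b := n)
    rw [habs_n, abs_of_pos (hposT i hi)] at hmem
    exact hmem hi
  have hpair_n : ∀ i ∈ S.erase n,
      invDTerm π i n + invDTerm π n i = signedGtCount |π i| (π n) := fun i hi => by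
    rw [invDTerm, invDTerm, if_pos (hlt i hi), if_neg (hlt i hi).not_gt, add_zero]
  have hpair_partner : signedGtCount |π (|π n|)| (π n) = 1 := by
    have := abs_lt.1 (hlt _ hpartner)
    rw [hπ.abs_apply_abs, hπ.apply_apply, habs_n, signedGtCount, if_pos this.2,
      if_neg this.1.not_gt]
  have hpair : ∀ i ∈ T, invDTerm π i |π n| + invDTerm π |π n| i = signedGtCount i (π n) :=
    fun i hi => hπ.invDTerm_add_invDTerm_abs_apply (hposT i hi)
      (hlt _ (mem_of_mem_erase (hmapT i hi))) (ne_of_mem_erase hi) (hπ.apply_ne_zero hnS)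
  calc invDOn S π
      = invDOn (S.erase n) π + ∑ i ∈ S.erase n, signedGtCount |π i| (π n) := by
        rw [← sum_congr rfl hpair_n, ← invDOn_insert (notMem_erase n S), insert_erase hn]
    _ = (invDOn T π + ∑ i ∈ T, signedGtCount i (π n)) +
          (1 + ∑ i ∈ T, signedGtCount |π i| (π n)) := by
        rw [← sum_congr rfl hpair, ← invDOn_insert (notMem_erase _ _), ← add_sum_erase _ _ hpartner,
          hpair_partner, insert_erase hpartner]
    _ = invDOn T π + (1 + 2 * ∑ i ∈ T, signedGtCount i (π n)) := by
        rw [hπ.sum_comp_abs_apply hposT hmapT fun c => signedGtCount c (π n)]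
        ring

end IsFPFSignedInvolution

/-- The finset of fixed-point-free signed involutions supported on `±S`. -/
def fpfSignedInvolutions (S : Finset ℤ) : Finset (Equiv.Perm ℤ) :=
  (IsFPFSignedInvolution.finite_setOf S).toFinset

@[simp]
theorem mem_fpfSignedInvolutions {S : Finset ℤ} {π : Equiv.Perm ℤ} :
    π ∈ fpfSignedInvolutions S ↔ IsFPFSignedInvolution S π :=
  Set.Finite.mem_toFinset _

theorem fpfSignedInvolutions_empty : fpfSignedInvolutions ∅ = {1} := by
  ext π
  rw [mem_fpfSignedInvolutions, mem_singleton]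
  refine ⟨fun hπ => Equiv.ext fun a => hπ.apply_of_abs_notMem a (notMem_empty _), ?_⟩
  rintro rfl
  exact ⟨fun _ => rfl, mul_one 1, fun _ _ => rfl, fun _ ha => absurd ha (notMem_empty _)⟩

theorem JDPoly_eq_sum (n : ℕ) :
    JDPoly n = ∑ π ∈ fpfSignedInvolutions (Icc 1 (n : ℤ)), X ^ invDOn (Icc 1 (n : ℤ)) π := by
  have hJD : JD n = fpfSignedInvolutions (Icc 1 (n : ℤ)) := by
    ext π
    rw [mem_JD_iff, mem_coe, mem_fpfSignedInvolutions]
  rw [JDPoly, hJD, finsum_mem_coe_finset]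
  exact sum_congr rfl fun π _ => by rw [invDStat_eq_invDOn]

section GeneratingFunction

variable {R : Type*} [CommSemiring R] {S : Finset ℤ} {n : ℤ}

theorem sum_pow_invDOn_filter_apply_max_eq (hpos : ∀ i ∈ S, 0 < i) (hn : n ∈ S)
    (hmax : ∀ i ∈ S, i ≤ n) {e : ℤ} (he : |e| ∈ S.erase n) (x : R) :
    ∑ π ∈ fpfSignedInvolutions S with π n = e, x ^ invDOn S π =
      (∑ ρ ∈ fpfSignedInvolutions ((S.erase n).erase |e|), x ^ invDOn ((S.erase n).erase |e|) ρ) *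
        x ^ (1 + 2 * ∑ i ∈ (S.erase n).erase |e|, signedGtCount i e) := by
  set T := (S.erase n).erase |e|
  have habs_n : |n| = n := abs_of_pos (hpos n hn)
  have hn0 : n ≠ 0 := (hpos n hn).ne'
  have he0 : e ≠ 0 := abs_pos.1 (hpos _ (mem_of_mem_erase he))
  have hne : |n| ≠ |e| := habs_n.symm ▸ (ne_of_mem_erase he).symm
  have hnT : |n| ∉ T := by simp [T, habs_n]
  have heT : |e| ∉ T := notMem_erase _ _
  have hS : insert |n| (insert |e| T) = S := by rw [insert_erase he, habs_n, insert_erase hn]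
  have hcancel (π : Equiv.Perm ℤ) : signedSwap n e * (signedSwap n e * π) = π := by
    rw [← mul_assoc, signedSwap_mul_self hn0 he0, one_mul]
  have hext : ∀ ρ ∈ fpfSignedInvolutions T,
      IsFPFSignedInvolution S (signedSwap n e * ρ) ∧ (signedSwap n e * ρ) n = e := fun ρ hρ => by
    rw [mem_fpfSignedInvolutions] at hρ
    refine ⟨hS ▸ hρ.signedSwap_mul hnT heT hn0 he0 hne, ?_⟩
    rw [Equiv.Perm.mul_apply, hρ.apply_of_abs_notMem n hnT, signedSwap_apply_left hn0 hne]
  rw [sum_mul]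
  refine (sum_nbij' (signedSwap n e * ·) (signedSwap n e * ·) (fun ρ hρ => ?_) (fun π hπ => ?_)
    (fun ρ _ => hcancel ρ) (fun π _ => hcancel π) fun ρ hρ => ?_).symm
  · rw [mem_filter, mem_fpfSignedInvolutions]
    exact hext ρ hρ
  · rw [mem_filter, mem_fpfSignedInvolutions] at hπ
    obtain ⟨hπ, rfl⟩ := hπ
    have := hπ.signedSwap_mul_erase (a := n) (by rwa [habs_n])
    rw [habs_n] at this
    exact mem_fpfSignedInvolutions.2 this
  · obtain ⟨hmem, happly⟩ := hext ρ hρ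
    have hagree : invDOn T (signedSwap n e * ρ : Equiv.Perm ℤ) = invDOn T ρ :=
      invDOn_congr fun i hi => (mem_fpfSignedInvolutions.1 hρ).signedSwap_mul_apply hnT heT <| by
        rwa [abs_of_pos (hpos i (mem_of_mem_erase (mem_of_mem_erase hi)))]
    rw [hmem.invDOn_eq_add_of_max hpos hn hmax, happly, hagree]
    exact (pow_add _ _ _).symm

theorem sum_pow_invDOn_eq_mul (hpos : ∀ i ∈ S, 0 < i) (hn : n ∈ S) (hmax : ∀ i ∈ S, i ≤ n)
    {k : ℕ} (hcard : #S = k + 2) {x g : R}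
    (hg : ∀ j ∈ S.erase n, ∑ ρ ∈ fpfSignedInvolutions ((S.erase n).erase j),
      x ^ invDOn ((S.erase n).erase j) ρ = g) :
    ∑ π ∈ fpfSignedInvolutions S, x ^ invDOn S π =
      g * (x * (∑ t ∈ range (2 * k + 1), (x ^ 2) ^ t + (x ^ 2) ^ k)) := by
  have habs_n : |n| = n := abs_of_pos (hpos n hn)
  have hposU : ∀ i ∈ S.erase n, 0 < i := fun i hi => hpos i (mem_of_mem_erase hi)
  have hcardU : #(S.erase n) = k + 1 := by rw [card_erase_of_mem hn, hcard]; rfl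
  have hmaps : ∀ π ∈ fpfSignedInvolutions S, π n ∈ S.erase n ∪ -S.erase n := fun π hπ => by
    rw [mem_fpfSignedInvolutions] at hπ
    have hnS : |n| ∈ S := by rwa [habs_n]
    exact mem_union_neg_of_abs_mem <| mem_erase.2
      ⟨fun h => hπ.abs_apply_ne n hnS (h.trans habs_n.symm), hπ.abs_apply_mem hnS⟩
  calc ∑ π ∈ fpfSignedInvolutions S, x ^ invDOn S π
      = ∑ e ∈ S.erase n ∪ -S.erase n,
          g * x ^ (1 + 2 * ∑ i ∈ (S.erase n).erase |e|, signedGtCount i e) := by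
        rw [← sum_fiberwise_of_maps_to hmaps]
        refine sum_congr rfl fun e he => ?_
        have he := abs_mem_of_mem_union_neg hposU he
        rw [sum_pow_invDOn_filter_apply_max_eq hpos hn hmax he, hg _ he]
    _ = g * (x * (∑ t ∈ range (2 * k + 1), (x ^ 2) ^ t + (x ^ 2) ^ k)) := by
        simp only [pow_add, pow_one, pow_mul, ← mul_sum]
        rw [sum_signed_rank hposU hcardU]

theorem sum_pow_invDOn_eq_prod (x : R) (m : ℕ) (hpos : ∀ i ∈ S, 0 < i) (hcard : #S = 2 * m) :
    ∑ π ∈ fpfSignedInvolutions S, x ^ invDOn S π =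
      ∏ k ∈ range m, x * (∑ t ∈ range (4 * k + 1), (x ^ 2) ^ t + (x ^ 2) ^ (2 * k)) := by
  induction m generalizing S with
  | zero =>
    obtain rfl : S = ∅ := card_eq_zero.1 hcard
    simp [fpfSignedInvolutions_empty, invDOn]
  | succ m ih =>
    have hne : S.Nonempty := card_pos.1 (by omega)
    have hn := S.max'_mem hne
    have hcard_erase : ∀ j ∈ S.erase (S.max' hne), #((S.erase (S.max' hne)).erase j) = 2 * m :=
      fun j hj => by
        rw [card_erase_of_mem hj, card_erase_of_mem hn]
        omega
    have hfour : 4 * m = 2 * (2 * m) := by ring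
    rw [prod_range_succ, hfour]
    exact sum_pow_invDOn_eq_mul hpos hn S.le_max' hcard fun j hj =>
      ih (fun i hi => hpos i (mem_of_mem_erase (mem_of_mem_erase hi))) (hcard_erase j hj)

end GeneratingFunction

section SymmUnimodal

/-- A sequence indexed by `ℤ` that is symmetric about `c / 2` and weakly decreasing in the distance
to `c / 2`. -/
def SymmUnimodal {R : Type*} [LE R] (c : ℤ) (a : ℤ → R) : Prop :=
  ∀ i j, |2 * j - c| ≤ |2 * i - c| → a i ≤ a j

namespace SymmUnimodal

variable {R : Type*} [PartialOrder R] {c : ℤ} {a b : ℤ → R}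

theorem symm (ha : SymmUnimodal c a) (i : ℤ) : a (c - i) = a i := by
  have h : |2 * (c - i) - c| = |2 * i - c| := by rw [← abs_neg]; ring_nf
  exact (ha _ _ h.ge).antisymm (ha _ _ h.le)

theorem le_of_le (ha : SymmUnimodal c a) {i j : ℤ} (hij : i ≤ j) (hj : 2 * j ≤ c) : a i ≤ a j :=
  ha i j <| by rw [abs_of_nonpos (by omega), abs_of_nonpos (by omega)]; omega

theorem le_of_ge (ha : SymmUnimodal c a) {i j : ℤ} (hi : c ≤ 2 * i) (hij : i ≤ j) : a j ≤ a i :=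
  ha j i <| by rw [abs_of_nonneg (by omega), abs_of_nonneg (by omega)]; omega

theorem of_symm_of_le_succ (hsymm : ∀ i, a (c - i) = a i)
    (hstep : ∀ i, 2 * (i + 1) ≤ c → a i ≤ a (i + 1)) : SymmUnimodal c a := by
  have hmono (i j : ℤ) (hij : i ≤ j) : 2 * j ≤ c → a i ≤ a j := by
    induction j, hij using Int.leInduction with
    | base => exact fun _ => le_rfl
    | succ j _ ih => exact fun hj => (ih (by omega)).trans (hstep j hj)
  have hreflect (i : ℤ) : ∃ i', a i' = a i ∧ 2 * i' = c - |2 * i - c| := by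
    rcases abs_choice (2 * i - c) with h | h
    · exact ⟨c - i, hsymm i, by omega⟩
    · exact ⟨i, rfl, by omega⟩
  intro i j hij
  obtain ⟨i', hi, hi'⟩ := hreflect i
  obtain ⟨j', hj, hj'⟩ := hreflect j
  have := abs_nonneg (2 * j - c)
  exact hi ▸ hj ▸ hmono i' j' (by omega) (by omega)

theorem comp_sub (ha : SymmUnimodal c a) (k : ℤ) : SymmUnimodal (c + 2 * k) fun i => a (i - k) :=
  fun i j hij => ha _ _ <| by
    have h (i : ℤ) : 2 * (i - k) - c = 2 * i - (c + 2 * k) := by ring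
    rwa [h, h]

variable [AddCommMonoid R] [IsOrderedAddMonoid R]

theorem add (ha : SymmUnimodal c a) (hb : SymmUnimodal c b) : SymmUnimodal c (a + b) :=
  fun i j hij => add_le_add (ha i j hij) (hb i j hij)

theorem sum_range_comp_sub (ha : SymmUnimodal c a) (N : ℕ) :
    SymmUnimodal (c + N) fun i => ∑ t ∈ range (N + 1), a (i - t) := by
  refine of_symm_of_le_succ (fun i => ?_) fun i hi => ?_
  · rw [← sum_range_reflect]
    refine sum_congr rfl fun t ht => ?_
    have htN : t ≤ N := by simpa [Nat.lt_succ_iff] using ht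
    rw [← ha.symm, Nat.add_sub_cancel, Nat.cast_sub htN]
    ring_nf
  · have hends : a (i - N) ≤ a (i + 1) :=
      ha _ _ <| by rw [abs_of_nonpos (by omega : 2 * (i - N) - c ≤ 0), abs_le]; omega
    rw [sum_range_succ, sum_range_succ']
    simpa using add_le_add_right hends _

end SymmUnimodal

end SymmUnimodal

section IntCoeff

variable {R : Type*} [Semiring R]

/-- The coefficients of a polynomial indexed by `ℤ`, so that reflections and shifts of the index
involve no truncated subtraction. -/
def intCoeff (p : R[X]) (i : ℤ) : R := if 0 ≤ i then p.coeff i.toNat else 0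

@[simp]
theorem intCoeff_natCast (p : R[X]) (k : ℕ) : intCoeff p k = p.coeff k := by simp [intCoeff]

theorem intCoeff_of_neg (p : R[X]) {i : ℤ} (hi : i < 0) : intCoeff p i = 0 := if_neg hi.not_ge

theorem intCoeff_add (p q : R[X]) (i : ℤ) : intCoeff (p + q) i = intCoeff p i + intCoeff q i := by
  simp only [intCoeff, coeff_add]
  split_ifs <;> simp

theorem intCoeff_sum {ι : Type*} (s : Finset ι) (p : ι → R[X]) (i : ℤ) :
    intCoeff (∑ t ∈ s, p t) i = ∑ t ∈ s, intCoeff (p t) i := by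
  simp only [intCoeff, finsetSum_coeff]
  split_ifs <;> simp

theorem intCoeff_X_pow_mul (p : R[X]) (k : ℕ) (i : ℤ) :
    intCoeff (X ^ k * p) i = intCoeff p (i - k) := by
  rcases lt_or_ge i 0 with hi | hi
  · rw [intCoeff_of_neg _ hi, intCoeff_of_neg _ (by omega)]
  lift i to ℕ using hi
  rw [intCoeff_natCast, coeff_X_pow_mul']
  split_ifs with hk
  · rw [← Nat.cast_sub hk, intCoeff_natCast]
  · rw [intCoeff_of_neg _ (by omega)]

theorem intCoeff_expand {R : Type*} [CommSemiring R] (p : R[X]) {r : ℕ} (hr : 0 < r) (i : ℤ) :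
    intCoeff (expand R r p) i = if (r : ℤ) ∣ i then intCoeff p (i / r) else 0 := by
  rcases lt_or_ge i 0 with hi | hi
  · have hdiv : i / r < 0 := Int.ediv_neg_of_neg_of_pos hi (by omega)
    rw [intCoeff_of_neg _ hi, intCoeff_of_neg _ hdiv, ite_self]
  lift i to ℕ using hi
  rw [intCoeff_natCast, coeff_expand hr, ← Int.natCast_ediv, intCoeff_natCast]
  simp only [Int.natCast_dvd_natCast]

theorem natDegree_eq_of_intCoeff_symm {p : R[X]} {c : ℕ}
    (hsymm : ∀ i, intCoeff p (c - i) = intCoeff p i) (h0 : p.coeff 0 ≠ 0) : p.natDegree = c := by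
  refine natDegree_eq_of_le_of_coeff_ne_zero (natDegree_le_iff_coeff_eq_zero.2 fun k hk => ?_) ?_
  · rw [← intCoeff_natCast, ← hsymm, intCoeff_of_neg _ (by omega)]
  · rwa [← intCoeff_natCast, ← hsymm, sub_self, ← Nat.cast_zero, intCoeff_natCast]

theorem intCoeff_one_of_ne_zero {i : ℤ} (hi : i ≠ 0) : intCoeff (1 : R[X]) i = 0 := by
  rcases hi.lt_or_gt with h | h
  · exact intCoeff_of_neg _ h
  · lift i to ℕ using h.le
    rw [intCoeff_natCast, coeff_one, if_neg (by simpa using hi)]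

theorem symmUnimodal_intCoeff_one [PartialOrder R] [ZeroLEOneClass R] :
    SymmUnimodal 0 (intCoeff (1 : R[X])) := by
  intro i j hij
  rcases eq_or_ne i 0 with rfl | hi
  · have hj : 2 * j - 0 = 0 := abs_nonpos_iff.1 hij
    obtain rfl : j = 0 := by omega
    exact le_rfl
  · rw [intCoeff_one_of_ne_zero hi, intCoeff]
    split_ifs
    · rw [coeff_one]
      split_ifs <;> simp
    · exact le_rfl

theorem SymmUnimodal.intCoeff_geom_sum_add_X_pow_mul [PartialOrder R] [IsOrderedAddMonoid R]
    {p : R[X]} {c : ℤ} (hp : SymmUnimodal c (intCoeff p)) (k : ℕ) :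
    SymmUnimodal (c + 2 * k) (intCoeff ((∑ t ∈ range (2 * k + 1), X ^ t + X ^ k) * p)) := by
  have hcoeff : intCoeff ((∑ t ∈ range (2 * k + 1), X ^ t + X ^ k) * p) =
      (fun i => ∑ t ∈ range (2 * k + 1), intCoeff p (i - t)) + fun i => intCoeff p (i - k) := by
    ext i
    simp only [add_mul, sum_mul, intCoeff_add, intCoeff_sum, intCoeff_X_pow_mul, Pi.add_apply]
  have hwindow := hp.sum_range_comp_sub (2 * k)
  push_cast at hwindow
  exact hcoeff ▸ hwindow.add (hp.comp_sub k)

end IntCoeff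

section JDPoly

/-- The polynomial with `𝒥𝒟_{2m}(q) = q ^ m * reducedJDPoly m (q ^ 2)`. -/
def reducedJDPoly (m : ℕ) : ℚ[X] :=
  ∏ k ∈ range m, (∑ t ∈ range (4 * k + 1), X ^ t + X ^ (2 * k))

theorem reducedJDPoly_succ (m : ℕ) :
    reducedJDPoly (m + 1) =
      (∑ t ∈ range (4 * m + 1), X ^ t + X ^ (2 * m)) * reducedJDPoly m := by
  rw [reducedJDPoly, prod_range_succ, mul_comm, ← reducedJDPoly]

theorem JDPoly_two_mul (m : ℕ) : JDPoly (2 * m) = X ^ m * expand ℚ 2 (reducedJDPoly m) := by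
  have hpos : ∀ i ∈ Icc 1 ((2 * m : ℕ) : ℤ), 0 < i := fun i hi => by
    have := mem_Icc.1 hi
    omega
  have hcard : #(Icc 1 ((2 * m : ℕ) : ℤ)) = 2 * m := by
    rw [Int.card_Icc]
    omega
  rw [JDPoly_eq_sum, sum_pow_invDOn_eq_prod X m hpos hcard, prod_mul_distrib, prod_const,
    card_range, reducedJDPoly, map_prod]
  simp only [map_add, map_sum, map_pow, expand_X]

theorem symmUnimodal_intCoeff_reducedJDPoly (m : ℕ) :
    SymmUnimodal (4 * m.choose 2 : ℕ) (intCoeff (reducedJDPoly m)) := by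
  induction m with
  | zero => simpa [reducedJDPoly] using symmUnimodal_intCoeff_one
  | succ m ih =>
    have hfour : 4 * m = 2 * (2 * m) := by ring
    have hcenter :
        ((4 * (m + 1).choose 2 : ℕ) : ℤ) = (4 * m.choose 2 : ℕ) + 2 * (2 * m : ℕ) := by
      rw [Nat.choose_succ_succ' m 1, Nat.choose_one_right]
      push_cast
      ring
    rw [hcenter, reducedJDPoly_succ, hfour]
    exact ih.intCoeff_geom_sum_add_X_pow_mul (2 * m)

theorem coeff_zero_reducedJDPoly_ne_zero (m : ℕ) : (reducedJDPoly m).coeff 0 ≠ 0 := by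
  rw [reducedJDPoly, coeff_zero_prod]
  refine prod_ne_zero_iff.2 fun k _ => ?_
  have hcoeff : (∑ t ∈ range (4 * k + 1), X ^ t + X ^ (2 * k) : ℚ[X]).coeff 0 =
      1 + if k = 0 then 1 else 0 := by
    simp [coeff_X_pow, eq_comm]
  rw [hcoeff]
  split_ifs <;> norm_num

theorem natDegree_reducedJDPoly (m : ℕ) : (reducedJDPoly m).natDegree = 4 * m.choose 2 :=
  natDegree_eq_of_intCoeff_symm (symmUnimodal_intCoeff_reducedJDPoly m).symm
    (coeff_zero_reducedJDPoly_ne_zero m)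

theorem natDegree_JDPoly_two_mul (m : ℕ) :
    (JDPoly (2 * m)).natDegree = m + 2 * (4 * m.choose 2) := by
  have hne : reducedJDPoly m ≠ 0 := fun h => coeff_zero_reducedJDPoly_ne_zero m (by simp [h])
  rw [JDPoly_two_mul, natDegree_X_pow_mul _ ((expand_ne_zero two_pos).2 hne), natDegree_expand,
    natDegree_reducedJDPoly]
  ring

theorem coeff_JDPoly_two_mul (m k : ℕ) :
    (JDPoly (2 * m)).coeff k =
      if (2 : ℤ) ∣ k - m then intCoeff (reducedJDPoly m) ((k - m) / 2) else 0 := by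
  rw [← intCoeff_natCast, JDPoly_two_mul, intCoeff_X_pow_mul, intCoeff_expand _ two_pos]
  rfl

theorem coeff_JDPoly_two_mul_add (m i : ℕ) :
    (JDPoly (2 * m)).coeff (m + 2 * i) = intCoeff (reducedJDPoly m) i := by
  rw [coeff_JDPoly_two_mul, if_pos (by omega)]
  congr 1
  omega

theorem coeff_JDPoly_two_mul_reflect (m k : ℕ) (hk : k ≤ m + (m + 2 * (4 * m.choose 2))) :
    (JDPoly (2 * m)).coeff (m + (m + 2 * (4 * m.choose 2)) - k) = (JDPoly (2 * m)).coeff k := by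
  rw [coeff_JDPoly_two_mul, coeff_JDPoly_two_mul]
  by_cases hdvd : (2 : ℤ) ∣ k - m
  swap
  · rw [if_neg hdvd, if_neg (by omega)]
  rw [if_pos hdvd, if_pos (by omega), ← (symmUnimodal_intCoeff_reducedJDPoly m).symm]
  congr 1
  omega

end JDPoly

theorem typeD_fpf_involution_inversion_symmetric_unimodal (n : ℕ) (h2 : 2 ≤ n)
    (he : Even n) :
    (∀ k : ℕ, ¬ k % 2 = (n / 2) % 2 → (JDPoly n).coeff k = 0) ∧
    (∀ k : ℕ, k ≤ n / 2 + (JDPoly n).natDegree →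
      (JDPoly n).coeff k = (JDPoly n).coeff (n / 2 + (JDPoly n).natDegree - k)) ∧
    (∃ t : ℕ,
      (∀ i j : ℕ, i ≤ j → j ≤ t →
        (JDPoly n).coeff (n / 2 + 2 * i) ≤ (JDPoly n).coeff (n / 2 + 2 * j)) ∧
      (∀ i j : ℕ, t ≤ i → i ≤ j →
        (JDPoly n).coeff (n / 2 + 2 * j) ≤ (JDPoly n).coeff (n / 2 + 2 * i))) := by
  obtain ⟨m, rfl⟩ := he.two_dvd
  have hm : 2 * m / 2 = m := Nat.mul_div_cancel_left m two_pos
  have hunimodal := symmUnimodal_intCoeff_reducedJDPoly m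
  rw [hm]
  refine ⟨fun k hk => ?_, fun k hk => ?_, 2 * m.choose 2, fun i j hij hj => ?_,
    fun i j hi hij => ?_⟩
  · rw [coeff_JDPoly_two_mul, if_neg (by omega)]
  · rw [natDegree_JDPoly_two_mul] at hk ⊢
    exact (coeff_JDPoly_two_mul_reflect m k hk).symm
  · simp only [coeff_JDPoly_two_mul_add]
    exact hunimodal.le_of_le (by omega) (by omega)
  · simp only [coeff_JDPoly_two_mul_add]
    exact hunimodal.le_of_ge (by omega) (by omega)
end
end
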